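/- arXiv:1312.7402 — 2 statements merged into one kernel-verified Lean document; each statement's English description precedes it below -/
import Mathlib

section
/- Assume (H1) and (H3), and that the kernel factorizes as K(u,v) = K⁽¹⁾(u)K⁽²⁾(v) with K⁽¹⁾ supported in [−A,A]^{d1}. Then for any bandwidth h ∈ (0,∞)^d with h_i ≤ 1/k_n for i = 1,…,d1, the kernel estimator f̂_h built with the true f_X satisfies R_x²(f̂_h,2) ≥ ‖K_h*f − f‖²_{x,2} + (‖K⁽²⁾‖₂² / (n ∏_{i=1}^d h_i)) · ∫ [K⁽¹⁾(s)]² / f_X(x − (s₁h₁,…,s_{d1}h_{d1})) ds − ‖K‖₁²‖f‖_∞/n, where R_x²(f̂_h,2) = E‖f̂_h − f‖²_{x,2} = ‖K_h*f − f‖²_{x,2} + ∫ Var(f̂_h(x,y)) dy. -/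
open MeasureTheory ProbabilityTheory

/-!
For each `y` the estimator is an average of i.i.d. copies of `Z_y = w(X) k(y - Y) / f_X(X)`, where
`w` is the dilated `K⁽¹⁾` reflected about `x` and `k` the dilated `K⁽²⁾`. Hence its integrated risk
is the integrated squared bias plus `(∫ E Z_y² dy - ∫ (E Z_y)² dy) / n`. The shear
`((X, Y), y) ↦ ((X, Y), y - Y)` factorizes the first integral exactly into
`(∫ w² / f_X) (∫ k²)`, and undoing the dilations yields the variance term of the bound. The loss
comes from the second integral only: the density weight in `E |Z_y|` is at most `‖f‖_∞` where
`w ≠ 0`, so `E |Z_y| ≤ ‖f‖_∞ ‖w‖₁ ‖k‖₁` for every `y`, while `∫ E |Z_y| dy = ‖w‖₁ ‖k‖₁`.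
-/

section SampleMean

variable {Ω E F ι : Type*} [MeasurableSpace Ω] [MeasurableSpace E] [MeasurableSpace F] [Fintype ι]
  {P : Measure Ω} {μ : Measure E} {W : ι → Ω → E}

theorem integral_sq_sub_const [IsProbabilityMeasure P] {Z : Ω → ℝ} (hZ : MemLp Z 2 P) (c : ℝ) :
    ∫ ω, (Z ω - c) ^ 2 ∂P = (∫ ω, Z ω ∂P - c) ^ 2 + Var[Z; P] := by
  have hvar := variance_eq_sub (hZ.sub (memLp_const c))
  have hmean : ∫ ω, (Z ω - c) ∂P = ∫ ω, Z ω ∂P - c := by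
    simp [integral_sub (hZ.integrable one_le_two) (integrable_const c)]
  simp only [Pi.sub_def, Pi.pow_def, hmean, variance_sub_const hZ.aestronglyMeasurable] at hvar
  linarith

theorem integral_sampleMean_comp [Nonempty ι] (hW : ∀ i, MeasurePreserving (W i) P μ) {z : E → ℝ}
    (hz : Integrable z μ) :
    ∫ ω, (Fintype.card ι : ℝ)⁻¹ * ∑ i, z (W i ω) ∂P = ∫ p, z p ∂μ := by
  have hcomp (i : ι) : ∫ ω, z (W i ω) ∂P = ∫ p, z p ∂μ := by
    rw [← (hW i).map_eq, integral_map (hW i).aemeasurable]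
    exact (hW i).map_eq ▸ hz.aestronglyMeasurable
  have hint (i : ι) : Integrable (fun ω => z (W i ω)) P := (hW i).integrable_comp_of_integrable hz
  rw [integral_const_mul, integral_finsetSum _ fun i _ => hint i]
  simp [hcomp]

theorem variance_sampleMean_comp (hW : ∀ i, MeasurePreserving (W i) P μ)
    (hindep : Pairwise fun i j => IndepFun (W i) (W j) P) {z : E → ℝ} (hz : MemLp z 2 μ) :
    Var[fun ω => (Fintype.card ι : ℝ)⁻¹ * ∑ i, z (W i ω); P] = Var[z; μ] / Fintype.card ι := by
  have hzm (i : ι) : AEMeasurable z (P.map (W i)) := (hW i).map_eq ▸ hz.aemeasurable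
  have hsum : Var[∑ i, fun ω => z (W i ω); P] = ∑ i, Var[fun ω => z (W i ω); P] :=
    IndepFun.variance_sum (fun i _ => hz.comp_measurePreserving (hW i)) fun i _ j _ hij =>
      (hindep hij).comp₀ (hW i).aemeasurable (hW j).aemeasurable (hzm i) (hzm j)
  simp only [(hW _).variance_fun_comp hz.aemeasurable, Finset.sum_fn, Finset.sum_const,
    Finset.card_univ, nsmul_eq_mul] at hsum
  rw [variance_const_mul, hsum]
  field_simp

variable {ρ : Measure F} [SFinite ρ] {Z : E → F → ℝ}

theorem ae_memLp_two_of_memLp_two_prod [SFinite μ]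
    (hZ : MemLp (Function.uncurry Z) 2 (μ.prod ρ)) :
    ∀ᵐ y ∂ρ, MemLp (fun p => Z p y) 2 μ := by
  filter_upwards [hZ.aestronglyMeasurable.prod_swap.prodMk_left,
    hZ.integrable_sq.prod_left_ae] with y hmeas hint
  exact (memLp_two_iff_integrable_sq hmeas).2 hint

variable [IsProbabilityMeasure P]

theorem isProbabilityMeasure_of_measurePreserving {T : Ω → E} (hT : MeasurePreserving T P μ) :
    IsProbabilityMeasure μ :=
  hT.map_eq ▸ Measure.isProbabilityMeasure_map hT.aemeasurable

variable [IsProbabilityMeasure μ]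

theorem integral_sq_sampleMean_comp_sub_const [Nonempty ι]
    (hW : ∀ i, MeasurePreserving (W i) P μ)
    (hindep : Pairwise fun i j => IndepFun (W i) (W j) P) {z : E → ℝ}
    (hz : MemLp z 2 μ) (c : ℝ) :
    ∫ ω, ((Fintype.card ι : ℝ)⁻¹ * ∑ i, z (W i ω) - c) ^ 2 ∂P
      = (∫ p, z p ∂μ - c) ^ 2
        + (∫ p, z p ^ 2 ∂μ - (∫ p, z p ∂μ) ^ 2) / Fintype.card ι := by
  have hmean : MemLp (fun ω => (Fintype.card ι : ℝ)⁻¹ * ∑ i, z (W i ω)) 2 P :=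
    (memLp_finsetSum _ fun i _ => hz.comp_measurePreserving (hW i)).const_mul _
  rw [integral_sq_sub_const hmean, integral_sampleMean_comp hW (hz.integrable one_le_two),
    variance_sampleMean_comp hW hindep hz, variance_eq_sub hz]
  simp only [Pi.pow_apply]

theorem memLp_two_integral_prod (hZ : MemLp (Function.uncurry Z) 2 (μ.prod ρ)) :
    MemLp (fun y => ∫ p, Z p y ∂μ) 2 ρ := by
  have hmeas : AEStronglyMeasurable (fun y => ∫ p, Z p y ∂μ) ρ :=
    hZ.aestronglyMeasurable.prod_swap.integral_prod_right'
  rw [memLp_two_iff_integrable_sq hmeas]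
  refine hZ.integrable_sq.integral_prod_right.mono' (hmeas.pow 2) ?_
  filter_upwards [ae_memLp_two_of_memLp_two_prod hZ] with y hy
  have hvar := variance_eq_sub hy ▸ variance_nonneg (fun p => Z p y) μ
  simpa using hvar

theorem integral_integral_sq_sampleMean_sub [Nonempty ι] (hW : ∀ i, MeasurePreserving (W i) P μ)
    (hindep : Pairwise fun i j => IndepFun (W i) (W j) P)
    (hZ : MemLp (Function.uncurry Z) 2 (μ.prod ρ)) {g : F → ℝ} (hg : MemLp g 2 ρ) :
    ∫ ω, ∫ y, ((Fintype.card ι : ℝ)⁻¹ * ∑ i, Z (W i ω) y - g y) ^ 2 ∂ρ ∂P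
      = ∫ y, (∫ p, Z p y ∂μ - g y) ^ 2 ∂ρ
        + (∫ p, ∫ y, Z p y ^ 2 ∂ρ ∂μ - ∫ y, (∫ p, Z p y ∂μ) ^ 2 ∂ρ) / Fintype.card ι := by
  have hZW (i : ι) : MemLp (fun q : Ω × F => Z (W i q.1) q.2) 2 (P.prod ρ) :=
    hZ.comp_measurePreserving ((hW i).prod (MeasurePreserving.id ρ))
  have herror : MemLp (Function.uncurry fun ω y =>
      (Fintype.card ι : ℝ)⁻¹ * ∑ i, Z (W i ω) y - g y) 2 (P.prod ρ) :=
    ((memLp_finsetSum _ fun i _ => hZW i).const_mul _).sub (hg.comp_snd P)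
  have hbias := memLp_two_integral_prod hZ
  have hsecond : Integrable (fun y => ∫ p, Z p y ^ 2 ∂μ) ρ := hZ.integrable_sq.integral_prod_right
  calc ∫ ω, ∫ y, ((Fintype.card ι : ℝ)⁻¹ * ∑ i, Z (W i ω) y - g y) ^ 2 ∂ρ ∂P
      = ∫ y, ∫ ω, ((Fintype.card ι : ℝ)⁻¹ * ∑ i, Z (W i ω) y - g y) ^ 2 ∂P ∂ρ :=
        integral_integral_swap herror.integrable_sq
    _ = ∫ y, ((∫ p, Z p y ∂μ - g y) ^ 2
          + (∫ p, Z p y ^ 2 ∂μ - (∫ p, Z p y ∂μ) ^ 2) / Fintype.card ι) ∂ρ := by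
        refine integral_congr_ae ?_
        filter_upwards [ae_memLp_two_of_memLp_two_prod hZ] with y hy
        exact integral_sq_sampleMean_comp_sub_const hW hindep hy (g y)
    _ = _ := by
        have hsq : Integrable (fun y => (∫ p, Z p y ∂μ - g y) ^ 2) ρ := (hbias.sub hg).integrable_sq
        have hvar : Integrable
            (fun y => (∫ p, Z p y ^ 2 ∂μ - (∫ p, Z p y ∂μ) ^ 2) / (Fintype.card ι : ℝ)) ρ :=
          (hsecond.sub hbias.integrable_sq).div_const _
        rw [integral_add hsq hvar, integral_div, integral_sub hsecond hbias.integrable_sq,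
          integral_integral_swap (f := fun p y => Z p y ^ 2) hZ.integrable_sq]

end SampleMean

section KernelSummand

/-- The contribution `a(p₁) k(y - p₂)` of an observation `p` to a kernel estimator at `y`, where `a`
weights the design and the translate of `k` smooths the response. -/
def kernelSummand {α G : Type*} [Sub G] (a : α → ℝ) (k : G → ℝ) (p : α × G) (y : G) : ℝ :=
  a p.1 * k (y - p.2)

theorem abs_kernelSummand {α G : Type*} [Sub G] (a : α → ℝ) (k : G → ℝ) (p : α × G) (y : G) :
    |kernelSummand a k p y| = kernelSummand (fun u => |a u|) (fun v => |k v|) p y :=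
  abs_mul _ _

theorem kernelSummand_sq {α G : Type*} [Sub G] (a : α → ℝ) (k : G → ℝ) (p : α × G) (y : G) :
    kernelSummand a k p y ^ 2 = kernelSummand (fun u => a u ^ 2) (fun v => k v ^ 2) p y :=
  mul_pow _ _ _

variable {α G : Type*} [MeasurableSpace α] [AddGroup G] [MeasurableSpace G] [MeasurableAdd₂ G]
  {μ : Measure (α × G)} {η : Measure G} [η.IsAddRightInvariant] {a : α → ℝ} {k : G → ℝ}

theorem integral_integral_kernelSummand (ha : AEStronglyMeasurable a μ.fst) :
    ∫ p, ∫ y, kernelSummand a k p y ∂η ∂μ = (∫ u, a u ∂μ.fst) * ∫ v, k v ∂η := by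
  have hfst : ∫ u, a u ∂μ.fst = ∫ p, a p.1 ∂μ := integral_map measurable_fst.aemeasurable ha
  simp only [kernelSummand, integral_const_mul, integral_sub_right_eq_self k, integral_mul_const,
    hfst]

variable [MeasurableNeg G] [SFinite μ] [SFinite η]

theorem measurePreserving_shear_sub : MeasurePreserving
    (fun q : (α × G) × G => (q.1, q.2 - q.1.2)) (μ.prod η) (μ.prod η) :=
  (MeasurePreserving.id μ).skew_product (g := fun p y => y - p.2) (by fun_prop)
    (.of_forall fun p => (measurePreserving_sub_right η p.2).map_eq)

theorem integrable_uncurry_kernelSummand (ha : Integrable a μ.fst) (hk : Integrable k η) :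
    Integrable (Function.uncurry (kernelSummand a k)) (μ.prod η) :=
  have hfst : MeasurePreserving Prod.fst μ μ.fst := ⟨measurable_fst, rfl⟩
  measurePreserving_shear_sub.integrable_comp_of_integrable
    ((hfst.integrable_comp_of_integrable ha).mul_prod hk)

theorem memLp_two_uncurry_kernelSummand (ha : MemLp a 2 μ.fst) (hk : MemLp k 2 η) :
    MemLp (Function.uncurry (kernelSummand a k)) 2 (μ.prod η) := by
  have hfst : MeasurePreserving Prod.fst μ μ.fst := ⟨measurable_fst, rfl⟩
  have hmeas : AEStronglyMeasurable (Function.uncurry (kernelSummand a k)) (μ.prod η) :=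
    ((ha.1.comp_measurePreserving hfst).comp_fst.mul hk.1.comp_snd).comp_measurePreserving
      measurePreserving_shear_sub
  have hsq := integrable_uncurry_kernelSummand ha.integrable_sq hk.integrable_sq
  refine (memLp_two_iff_integrable_sq hmeas).2 (hsq.congr (.of_forall fun q => ?_))
  exact (kernelSummand_sq a k q.1 q.2).symm

end KernelSummand

section JointDensity

theorem mul_div_sq_cancel (c w : ℝ) : c * (w / c) ^ 2 = w ^ 2 / c := by
  field_simp

theorem integral_withDensity_ofReal {β : Type*} [MeasurableSpace β] {ν : Measure β} {φ : β → ℝ}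
    (hφ : Measurable φ) (hφ0 : 0 ≤ φ) (g : β → ℝ) :
    ∫ p, g p ∂(ν.withDensity fun p => ENNReal.ofReal (φ p)) = ∫ p, φ p * g p ∂ν := by
  rw [integral_withDensity_eq_integral_toReal_smul hφ.ennreal_ofReal
    (.of_forall fun _ => ENNReal.ofReal_lt_top)]
  simp only [ENNReal.toReal_ofReal (hφ0 _), smul_eq_mul]

theorem integrable_withDensity_ofReal_iff {β : Type*} [MeasurableSpace β] {ν : Measure β}
    {φ : β → ℝ} (hφ : Measurable φ) (hφ0 : 0 ≤ φ) {g : β → ℝ} :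
    Integrable g (ν.withDensity fun p => ENNReal.ofReal (φ p)) ↔
      Integrable (fun p => φ p * g p) ν := by
  rw [integrable_withDensity_iff_integrable_smul' hφ.ennreal_ofReal
    (.of_forall fun _ => ENNReal.ofReal_lt_top)]
  simp only [ENNReal.toReal_ofReal (hφ0 _), smul_eq_mul]

/-- The marginal density `f_X(u) = ∫ φ(u, v) dη(v)` of the first coordinate under a joint density
`φ`; it is `0` where the section `φ(u, ·)` is not integrable. -/
noncomputable def marginalDensity {α G : Type*} [MeasurableSpace G] (η : Measure G)
    (φ : α → G → ℝ) (u : α) : ℝ :=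
  ∫ v, φ u v ∂η

/-- The conditional density `f(u, y) = φ(u, y) / f_X(u)` of the second coordinate given the first
under a joint density `φ`; it is `0` where `f_X` vanishes. -/
noncomputable def conditionalDensity {α G : Type*} [MeasurableSpace G] (η : Measure G)
    (φ : α → G → ℝ) (u : α) (y : G) : ℝ :=
  φ u y / marginalDensity η φ u

/-- The law with density `φ` with respect to the product of the reference measures `ν` and `η`. -/
noncomputable def jointLaw {α G : Type*} [MeasurableSpace α] [MeasurableSpace G] (ν : Measure α)
    (η : Measure G) (φ : α → G → ℝ) : Measure (α × G) :=
  (ν.prod η).withDensity fun p => ENNReal.ofReal (φ p.1 p.2)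

variable {α G : Type*} [MeasurableSpace G] {η : Measure G} {φ : α → G → ℝ}

theorem marginalDensity_nonneg (hφ0 : ∀ u v, 0 ≤ φ u v) (u : α) : 0 ≤ marginalDensity η φ u :=
  integral_nonneg (hφ0 u)

theorem memLp_two_conditionalDensity {x : α} {S : ℝ} (hφ0 : ∀ v, 0 ≤ φ x v)
    (hx : 0 < marginalDensity η φ x) (hS : ∀ y, conditionalDensity η φ x y ≤ S) :
    MemLp (conditionalDensity η φ x) 2 η := by
  have hint : Integrable (conditionalDensity η φ x) η :=
    (Integrable.of_integral_ne_zero hx.ne').div_const _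
  refine (memLp_two_iff_integrable_sq hint.1).2 ((hint.const_mul S).mono' (hint.1.pow 2) ?_)
  filter_upwards with y
  have hnonneg : 0 ≤ conditionalDensity η φ x y := div_nonneg (hφ0 y) hx.le
  rw [Real.norm_of_nonneg (sq_nonneg _), sq]
  exact mul_le_mul_of_nonneg_right (hS y) hnonneg

theorem le_mul_marginalDensity_of_div_ne_zero {w : α → ℝ} {S : ℝ}
    (hw0 : ∀ u, w u ≠ 0 → 0 < marginalDensity η φ u)
    (hwS : ∀ u v, w u ≠ 0 → conditionalDensity η φ u v ≤ S) (u : α) (v : G)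
    (hu : w u / marginalDensity η φ u ≠ 0) : φ u v ≤ S * marginalDensity η φ u :=
  have hwu : w u ≠ 0 := (div_ne_zero_iff.1 hu).1
  (div_le_iff₀ (hw0 u hwu)).1 (hwS u v hwu)

variable [MeasurableSpace α] {ν : Measure α}

theorem integral_jointLaw (hφ : Measurable (Function.uncurry φ)) (hφ0 : ∀ u v, 0 ≤ φ u v)
    (g : α × G → ℝ) : ∫ p, g p ∂(jointLaw ν η φ) = ∫ p, φ p.1 p.2 * g p ∂(ν.prod η) :=
  integral_withDensity_ofReal hφ (fun p => hφ0 p.1 p.2) g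

theorem integrable_jointLaw_iff (hφ : Measurable (Function.uncurry φ)) (hφ0 : ∀ u v, 0 ≤ φ u v)
    {g : α × G → ℝ} :
    Integrable g (jointLaw ν η φ) ↔ Integrable (fun p => φ p.1 p.2 * g p) (ν.prod η) :=
  integrable_withDensity_ofReal_iff hφ fun p => hφ0 p.1 p.2

variable [SFinite η]

theorem measurable_marginalDensity (hφ : Measurable (Function.uncurry φ)) :
    Measurable (marginalDensity η φ) :=
  hφ.stronglyMeasurable.integral_prod_right.measurable

variable [SFinite ν] [IsFiniteMeasure (jointLaw ν η φ)]

theorem fst_jointLaw (hφ : Measurable (Function.uncurry φ)) (hφ0 : ∀ u v, 0 ≤ φ u v) :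
    (jointLaw ν η φ).fst = ν.withDensity fun u => ENNReal.ofReal (marginalDensity η φ u) := by
  have hint : Integrable (Function.uncurry φ) (ν.prod η) := by
    simpa only [mul_one] using!
      (integrable_jointLaw_iff hφ hφ0).1 (integrable_const (μ := jointLaw ν η φ) (1 : ℝ))
  ext s hs
  rw [Measure.fst_apply hs, jointLaw, withDensity_apply _ (measurable_fst hs),
    withDensity_apply _ hs, ← Set.prod_univ, ← Measure.prod_restrict, Measure.restrict_univ,
    lintegral_prod (fun p : α × G => ENNReal.ofReal (φ p.1 p.2)) hφ.ennreal_ofReal.aemeasurable]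
  refine lintegral_congr_ae (ae_restrict_of_ae ?_)
  filter_upwards [hint.prod_right_ae] with u hu
  exact (ofReal_integral_eq_lintegral_ofReal hu (.of_forall (hφ0 u))).symm

theorem integral_fst_jointLaw (hφ : Measurable (Function.uncurry φ)) (hφ0 : ∀ u v, 0 ≤ φ u v)
    (a : α → ℝ) :
    ∫ u, a u ∂(jointLaw ν η φ).fst = ∫ u, marginalDensity η φ u * a u ∂ν := by
  rw [fst_jointLaw hφ hφ0,
    integral_withDensity_ofReal (measurable_marginalDensity hφ) (marginalDensity_nonneg hφ0)]

theorem integrable_fst_jointLaw_iff (hφ : Measurable (Function.uncurry φ))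
    (hφ0 : ∀ u v, 0 ≤ φ u v) {a : α → ℝ} :
    Integrable a (jointLaw ν η φ).fst ↔ Integrable (fun u => marginalDensity η φ u * a u) ν := by
  rw [fst_jointLaw hφ hφ0, integrable_withDensity_ofReal_iff (measurable_marginalDensity hφ)
    (marginalDensity_nonneg hφ0)]

theorem memLp_two_div_marginalDensity (hφ : Measurable (Function.uncurry φ))
    (hφ0 : ∀ u v, 0 ≤ φ u v) {w : α → ℝ} {δ : ℝ} (hδ : 0 < δ)
    (hwδ : ∀ u, w u ≠ 0 → δ ≤ marginalDensity η φ u) (hw2 : MemLp w 2 ν) :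
    MemLp (fun u => w u / marginalDensity η φ u) 2 (jointLaw ν η φ).fst := by
  have hfX : AEStronglyMeasurable (marginalDensity η φ) ν :=
    (measurable_marginalDensity hφ).aestronglyMeasurable
  have hac : (jointLaw ν η φ).fst ≪ ν :=
    fst_jointLaw (ν := ν) (η := η) hφ hφ0 ▸ withDensity_absolutelyContinuous ν _
  refine (memLp_two_iff_integrable_sq ((hw2.1.div₀ hfX).mono_ac hac)).2
    ((integrable_fst_jointLaw_iff hφ hφ0).2 ?_)
  refine (hw2.integrable_sq.div_const δ).mono' (hfX.mul ((hw2.1.div₀ hfX).pow 2))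
    (.of_forall fun u => ?_)
  rw [Real.norm_of_nonneg (mul_nonneg (marginalDensity_nonneg hφ0 u) (sq_nonneg _)),
    Pi.div_apply, mul_div_sq_cancel]
  by_cases hwu : w u = 0
  · simp [hwu]
  · exact div_le_div_of_nonneg_left (sq_nonneg _) hδ (hwδ u hwu)

end JointDensity

theorem integral_sq_le_mul_integral {β : Type*} [MeasurableSpace β] {ν : Measure β} {m b : β → ℝ}
    {C : ℝ} (hmb : ∀ y, |m y| ≤ b y) (hbC : ∀ y, b y ≤ C) (hb : Integrable b ν) :
    ∫ y, m y ^ 2 ∂ν ≤ C * ∫ y, b y ∂ν := by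
  rw [← integral_const_mul]
  refine integral_mono_of_nonneg (.of_forall fun y => sq_nonneg (m y)) (hb.const_mul C)
    (.of_forall fun y => ?_)
  calc m y ^ 2 = |m y| * |m y| := by rw [← sq, sq_abs]
    _ ≤ C * b y := mul_le_mul ((hmb y).trans (hbC y)) (hmb y) (abs_nonneg _)
        ((abs_nonneg _).trans ((hmb y).trans (hbC y)))

section KernelMean

variable {α G : Type*} [AddCommGroup G] [MeasurableSpace G] {η : Measure G} {φ : α → G → ℝ}
  {a : α → ℝ} {k : G → ℝ} {S : ℝ}

theorem density_mul_abs_kernelSummand_le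
    (hS : ∀ u v, a u ≠ 0 → φ u v ≤ S * marginalDensity η φ u) (p : α × G) (y : G) :
    φ p.1 p.2 * |kernelSummand a k p y|
      ≤ S * ((marginalDensity η φ p.1 * |a p.1|) * |k (y - p.2)|) := by
  rw [abs_kernelSummand, kernelSummand]
  by_cases hu : a p.1 = 0
  · simp [hu]
  · calc φ p.1 p.2 * (|a p.1| * |k (y - p.2)|)
        ≤ S * marginalDensity η φ p.1 * (|a p.1| * |k (y - p.2)|) := by
          gcongr
          exact hS p.1 p.2 hu
      _ = _ := by ring

variable [MeasurableSpace α] {ν : Measure α} [MeasurableAdd₂ G] [MeasurableNeg G]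
  [η.IsAddLeftInvariant] [η.IsNegInvariant]

theorem integrable_kernelSummand_jointLaw (hφ : Measurable (Function.uncurry φ))
    (hφ0 : ∀ u v, 0 ≤ φ u v) (hS : ∀ u v, a u ≠ 0 → φ u v ≤ S * marginalDensity η φ u)
    (ham : AEStronglyMeasurable a ν) (ha : Integrable (fun u => marginalDensity η φ u * a u) ν)
    (hk : Integrable k η) (y : G) :
    Integrable (fun p => kernelSummand a k p y) (jointLaw ν η φ) := by
  have hmeas : AEStronglyMeasurable (fun p => φ p.1 p.2 * kernelSummand a k p y) (ν.prod η) :=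
    hφ.aestronglyMeasurable.mul (ham.comp_fst.mul (hk.comp_sub_left y).1.comp_snd)
  refine (integrable_jointLaw_iff hφ hφ0).2
    (((ha.abs.mul_prod (hk.comp_sub_left y).abs).const_mul S).mono' hmeas (.of_forall fun p => ?_))
  rw [Real.norm_eq_abs, abs_mul, abs_mul, abs_of_nonneg (hφ0 _ _),
    abs_of_nonneg (marginalDensity_nonneg hφ0 _)]
  exact density_mul_abs_kernelSummand_le hS p y

variable [SFinite ν] [SFinite η]

theorem integral_kernelSummand_jointLaw (hφ : Measurable (Function.uncurry φ))
    (hφ0 : ∀ u v, 0 ≤ φ u v) (hS : ∀ u v, a u ≠ 0 → φ u v ≤ S * marginalDensity η φ u)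
    (ham : AEStronglyMeasurable a ν) (ha : Integrable (fun u => marginalDensity η φ u * a u) ν)
    (hk : Integrable k η) (y : G) :
    ∫ p, kernelSummand a k p y ∂(jointLaw ν η φ)
      = ∫ u, ∫ v, φ u v * (a u * k (y - v)) ∂η ∂ν := by
  rw [integral_jointLaw hφ hφ0, integral_prod _
    ((integrable_jointLaw_iff hφ hφ0).1 (integrable_kernelSummand_jointLaw hφ hφ0 hS ham ha hk y))]
  simp only [kernelSummand]

theorem integral_kernelSummand_div_marginalDensity (hφ : Measurable (Function.uncurry φ))
    (hφ0 : ∀ u v, 0 ≤ φ u v) {w : α → ℝ} (hw0 : ∀ u, w u ≠ 0 → 0 < marginalDensity η φ u)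
    (hwS : ∀ u v, w u ≠ 0 → conditionalDensity η φ u v ≤ S) (hw : Integrable w ν)
    (hk : Integrable k η) (y : G) :
    ∫ p, kernelSummand (fun u => w u / marginalDensity η φ u) k p y ∂(jointLaw ν η φ)
      = ∫ u, ∫ v, w u * k (y - v) * conditionalDensity η φ u v ∂η ∂ν := by
  have hmeas : AEStronglyMeasurable (fun u => w u / marginalDensity η φ u) ν :=
    hw.1.div₀ (measurable_marginalDensity hφ).aestronglyMeasurable
  have hweight (u : α) : marginalDensity η φ u * (w u / marginalDensity η φ u) = w u :=
    mul_div_cancel_of_imp' fun hu => by_contra fun hwu => (hw0 u hwu).ne' hu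
  rw [integral_kernelSummand_jointLaw hφ hφ0 (le_mul_marginalDensity_of_div_ne_zero hw0 hwS) hmeas
    (by simpa only [hweight]) hk]
  congr! 4 with u v
  rw [conditionalDensity]
  ring

variable [IsFiniteMeasure (jointLaw ν η φ)]

theorem integral_abs_kernelSummand_jointLaw_le (hφ : Measurable (Function.uncurry φ))
    (hφ0 : ∀ u v, 0 ≤ φ u v) (hS : ∀ u v, a u ≠ 0 → φ u v ≤ S * marginalDensity η φ u)
    (ha : Integrable a (jointLaw ν η φ).fst) (hk : Integrable k η) (y : G) :
    ∫ p, |kernelSummand a k p y| ∂(jointLaw ν η φ)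
      ≤ S * ((∫ u, |a u| ∂(jointLaw ν η φ).fst) * ∫ v, |k v| ∂η) := by
  have ha' : Integrable (fun u => marginalDensity η φ u * |a u|) ν :=
    (integrable_fst_jointLaw_iff hφ hφ0).1 ha.abs
  calc ∫ p, |kernelSummand a k p y| ∂(jointLaw ν η φ)
      = ∫ p, φ p.1 p.2 * |kernelSummand a k p y| ∂(ν.prod η) := integral_jointLaw hφ hφ0 _
    _ ≤ ∫ p, S * ((marginalDensity η φ p.1 * |a p.1|) * |k (y - p.2)|) ∂(ν.prod η) :=
        integral_mono_of_nonneg (.of_forall fun p => mul_nonneg (hφ0 _ _) (abs_nonneg _))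
          ((ha'.mul_prod (hk.comp_sub_left y).abs).const_mul S)
          (.of_forall fun p => density_mul_abs_kernelSummand_le hS p y)
    _ = S * ((∫ u, |a u| ∂(jointLaw ν η φ).fst) * ∫ v, |k v| ∂η) := by
        rw [integral_const_mul, integral_prod_mul (fun u => marginalDensity η φ u * |a u|)
          (fun v => |k (y - v)|), integral_fst_jointLaw hφ hφ0,
          integral_sub_left_eq_self (fun v => |k v|) η y]

theorem integral_sq_integral_kernelSummand_le (hφ : Measurable (Function.uncurry φ))
    (hφ0 : ∀ u v, 0 ≤ φ u v) (hS : ∀ u v, a u ≠ 0 → φ u v ≤ S * marginalDensity η φ u)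
    (ha : Integrable a (jointLaw ν η φ).fst) (hk : Integrable k η) :
    ∫ y, (∫ p, kernelSummand a k p y ∂(jointLaw ν η φ)) ^ 2 ∂η
      ≤ S * ((∫ u, |a u| ∂(jointLaw ν η φ).fst) * ∫ v, |k v| ∂η) ^ 2 := by
  have habs : Integrable (Function.uncurry fun p y => |kernelSummand a k p y|)
      ((jointLaw ν η φ).prod η) := (integrable_uncurry_kernelSummand ha hk).abs
  have hmass : ∫ y, ∫ p, |kernelSummand a k p y| ∂(jointLaw ν η φ) ∂η
      = (∫ u, |a u| ∂(jointLaw ν η φ).fst) * ∫ v, |k v| ∂η := by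
    rw [← integral_integral_swap habs]
    simp only [abs_kernelSummand]
    exact integral_integral_kernelSummand ha.abs.1
  calc _ ≤ S * ((∫ u, |a u| ∂(jointLaw ν η φ).fst) * ∫ v, |k v| ∂η)
          * ∫ y, ∫ p, |kernelSummand a k p y| ∂(jointLaw ν η φ) ∂η :=
        integral_sq_le_mul_integral (fun y => abs_integral_le_integral_abs)
          (integral_abs_kernelSummand_jointLaw_le hφ hφ0 hS ha hk) habs.integral_prod_right
    _ = _ := by rw [hmass]; ring

end KernelMean

section WeightedKernelEstimator

variable {Ω ι α G : Type*} [MeasurableSpace Ω] [Fintype ι] [Nonempty ι] [MeasurableSpace α]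
  [AddCommGroup G] [MeasurableSpace G] [MeasurableAdd₂ G] [MeasurableNeg G]
  {P : Measure Ω} [IsProbabilityMeasure P] {ν : Measure α} [SFinite ν] {η : Measure G} [SFinite η]
  [η.IsAddLeftInvariant] [η.IsNegInvariant] {φ : α → G → ℝ} {W : ι → Ω → α × G}
  {k g : G → ℝ} {S : ℝ}

theorem le_integral_integral_sq_sampleMean_kernelSummand_sub
    (hW : ∀ i, MeasurePreserving (W i) P (jointLaw ν η φ))
    (hindep : Pairwise fun i j => IndepFun (W i) (W j) P)
    (hφ : Measurable (Function.uncurry φ)) (hφ0 : ∀ u v, 0 ≤ φ u v) {a : α → ℝ}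
    (hS : ∀ u v, a u ≠ 0 → φ u v ≤ S * marginalDensity η φ u)
    (ha : MemLp a 2 (jointLaw ν η φ).fst) (hk : Integrable k η) (hk2 : MemLp k 2 η)
    (hg : MemLp g 2 η) :
    ∫ y, (∫ p, kernelSummand a k p y ∂(jointLaw ν η φ) - g y) ^ 2 ∂η
        + ((∫ u, a u ^ 2 ∂(jointLaw ν η φ).fst) * (∫ v, k v ^ 2 ∂η)
          - S * ((∫ u, |a u| ∂(jointLaw ν η φ).fst) * ∫ v, |k v| ∂η) ^ 2) / Fintype.card ι
      ≤ ∫ ω, ∫ y, ((Fintype.card ι : ℝ)⁻¹ * ∑ i, kernelSummand a k (W i ω) y - g y) ^ 2 ∂η ∂P := by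
  have : IsProbabilityMeasure (jointLaw ν η φ) :=
    isProbabilityMeasure_of_measurePreserving (hW (Classical.arbitrary ι))
  have hmean := integral_sq_integral_kernelSummand_le hφ hφ0 hS (ha.integrable one_le_two) hk
  rw [integral_integral_sq_sampleMean_sub hW hindep (memLp_two_uncurry_kernelSummand ha hk2) hg]
  simp only [kernelSummand_sq]
  rw [integral_integral_kernelSummand ha.integrable_sq.1]
  gcongr

theorem le_integral_integral_sq_sampleMean_div_marginalDensity_sub
    (hW : ∀ i, MeasurePreserving (W i) P (jointLaw ν η φ))
    (hindep : Pairwise fun i j => IndepFun (W i) (W j) P)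
    (hφ : Measurable (Function.uncurry φ)) (hφ0 : ∀ u v, 0 ≤ φ u v) {w : α → ℝ} {δ : ℝ}
    (hδ : 0 < δ) (hwδ : ∀ u, w u ≠ 0 → δ ≤ marginalDensity η φ u)
    (hwS : ∀ u v, w u ≠ 0 → conditionalDensity η φ u v ≤ S)
    (hw : Integrable w ν) (hw2 : MemLp w 2 ν) (hk : Integrable k η) (hk2 : MemLp k 2 η)
    (hg : MemLp g 2 η) :
    ∫ y, ((∫ u, ∫ v, w u * k (y - v) * conditionalDensity η φ u v ∂η ∂ν) - g y) ^ 2 ∂η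
        + ((∫ u, w u ^ 2 / marginalDensity η φ u ∂ν) * (∫ v, k v ^ 2 ∂η)
          - S * ((∫ u, |w u| ∂ν) * ∫ v, |k v| ∂η) ^ 2) / Fintype.card ι
      ≤ ∫ ω, ∫ y, ((Fintype.card ι : ℝ)⁻¹ * ∑ i, w (W i ω).1 * k (y - (W i ω).2)
          / marginalDensity η φ (W i ω).1 - g y) ^ 2 ∂η ∂P := by
  have : IsProbabilityMeasure (jointLaw ν η φ) :=
    isProbabilityMeasure_of_measurePreserving (hW (Classical.arbitrary ι))
  have hw0 (u : α) (hu : w u ≠ 0) : 0 < marginalDensity η φ u := hδ.trans_le (hwδ u hu)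
  have habs (u : α) : marginalDensity η φ u * |w u / marginalDensity η φ u| = |w u| := by
    rw [abs_div, abs_of_nonneg (marginalDensity_nonneg hφ0 u)]
    exact mul_div_cancel_of_imp' fun hu => by_contra fun hwu =>
      (hw0 u (abs_ne_zero.1 hwu)).ne' hu
  have hrisk := le_integral_integral_sq_sampleMean_kernelSummand_sub hW hindep hφ hφ0
    (le_mul_marginalDensity_of_div_ne_zero hw0 hwS)
    (memLp_two_div_marginalDensity hφ hφ0 hδ hwδ hw2) hk hk2 hg
  simp only [integral_kernelSummand_div_marginalDensity hφ hφ0 hw0 hwS hw hk,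
    integral_fst_jointLaw hφ hφ0, mul_div_sq_cancel, habs] at hrisk
  simpa only [kernelSummand, div_mul_eq_mul_div] using hrisk

end WeightedKernelEstimator

section Dilation

variable {ι : Type*} {h : ι → ℝ}

theorem measurableEmbedding_div_pi (hh : ∀ i, h i ≠ 0) :
    MeasurableEmbedding fun u : ι → ℝ => u / h := by
  have hembed := (MeasurableEquiv.piCongrRight fun i =>
    MeasurableEquiv.mulRight₀ (h i)⁻¹ (inv_ne_zero (hh i))).measurableEmbedding
  simpa only [div_eq_mul_inv] using! hembed

variable [Fintype ι]

theorem map_div_pi_volume (hh : ∀ i, h i ≠ 0) :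
    Measure.map (fun u : ι → ℝ => u / h) volume = ENNReal.ofReal |∏ i, h i| • volume := by
  classical
  have hdet : (Matrix.diagonal h⁻¹).det = (∏ i, h i)⁻¹ := by
    simp [Matrix.det_diagonal, Finset.prod_inv_distrib]
  have hmap : ⇑(Matrix.toLin' (Matrix.diagonal h⁻¹)) = fun u : ι → ℝ => u / h := by
    ext u i
    simp [Matrix.mulVec_diagonal, div_eq_inv_mul]
  rw [← hmap, Real.map_matrix_volume_pi_eq_smul_volume_pi, hdet, inv_inv]
  exact hdet ▸ inv_ne_zero (Finset.prod_ne_zero_iff.2 fun i _ => hh i)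

theorem integral_comp_div_pi {E : Type*} [NormedAddCommGroup E] [NormedSpace ℝ E]
    (hh : ∀ i, h i ≠ 0) (g : (ι → ℝ) → E) : ∫ u, g (u / h) = |∏ i, h i| • ∫ u, g u := by
  rw [← (measurableEmbedding_div_pi hh).integral_map, map_div_pi_volume hh, integral_smul_measure,
    ENNReal.toReal_ofReal (abs_nonneg _)]

theorem memLp_comp_div_pi {E : Type*} [NormedAddCommGroup E] {p : ENNReal} (hh : ∀ i, h i ≠ 0)
    {g : (ι → ℝ) → E} (hg : MemLp g p) : MemLp (fun u => g (u / h)) p := by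
  refine (measurableEmbedding_div_pi hh).memLp_map_measure_iff.1 ?_
  rw [map_div_pi_volume hh]
  exact hg.smul_measure ENNReal.ofReal_ne_top

/-- The dilated kernel `K_h(u) = (∏ i, h i)⁻¹ K(u₁ / h₁, u₂ / h₂, …)` with one bandwidth per
coordinate. -/
noncomputable def dilate (h : ι → ℝ) (K : (ι → ℝ) → ℝ) (u : ι → ℝ) : ℝ :=
  (∏ i, h i)⁻¹ * K (u / h)

theorem memLp_dilate {p : ENNReal} (hh : ∀ i, h i ≠ 0) {K : (ι → ℝ) → ℝ} (hK : MemLp K p) :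
    MemLp (dilate h K) p :=
  (memLp_comp_div_pi hh hK).const_mul _

theorem integrable_dilate (hh : ∀ i, h i ≠ 0) {K : (ι → ℝ) → ℝ} (hK : Integrable K) :
    Integrable (dilate h K) :=
  memLp_one_iff_integrable.1 (memLp_dilate hh (memLp_one_iff_integrable.2 hK))

theorem integral_abs_dilate (hh : ∀ i, h i ≠ 0) (K : (ι → ℝ) → ℝ) :
    ∫ u, |dilate h K u| = ∫ u, |K u| := by
  have hprod : |∏ i, h i| ≠ 0 := abs_ne_zero.2 (Finset.prod_ne_zero_iff.2 fun i _ => hh i)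
  simp only [dilate, abs_mul, abs_inv, integral_const_mul]
  rw [integral_comp_div_pi hh fun u => |K u|, smul_eq_mul, inv_mul_cancel_left₀ hprod]

theorem integral_dilate_sq_mul (hh : ∀ i, 0 < h i) (K g : (ι → ℝ) → ℝ) :
    ∫ u, dilate h K u ^ 2 * g u = (∏ i, h i)⁻¹ * ∫ s, K s ^ 2 * g (s * h) := by
  have hprod : 0 < ∏ i, h i := Finset.prod_pos fun i _ => hh i
  have hh0 (i : ι) : h i ≠ 0 := (hh i).ne'
  have hscale (u : ι → ℝ) :
      dilate h K u ^ 2 * g u = (∏ i, h i)⁻¹ ^ 2 * (K (u / h) ^ 2 * g (u / h * h)) := by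
    have hcancel : u / h * h = u := funext fun i => div_mul_cancel₀ (u i) (hh0 i)
    rw [dilate, hcancel]
    ring
  simp only [hscale, integral_const_mul]
  rw [integral_comp_div_pi hh0 fun s => K s ^ 2 * g (s * h), abs_of_pos hprod, smul_eq_mul]
  field_simp

theorem integral_dilate_sq (hh : ∀ i, 0 < h i) (K : (ι → ℝ) → ℝ) :
    ∫ u, dilate h K u ^ 2 = (∏ i, h i)⁻¹ * ∫ s, K s ^ 2 := by
  simpa only [mul_one] using integral_dilate_sq_mul hh K fun _ => 1

theorem integral_dilate_sub_sq_div (hh : ∀ i, 0 < h i) (K g : (ι → ℝ) → ℝ) (x : ι → ℝ) :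
    ∫ u, dilate h K (x - u) ^ 2 / g u = (∏ i, h i)⁻¹ * ∫ s, K s ^ 2 / g (x - s * h) := by
  rw [← integral_sub_left_eq_self _ volume x]
  simp only [sub_sub_cancel, div_eq_mul_inv]
  exact integral_dilate_sq_mul hh K fun u => (g (x - u))⁻¹

end Dilation

section ProductKernel

variable {E F : Type*} [MeasurableSpace E] [MeasurableSpace F] {ν : Measure E} {η : Measure F}
  [SFinite ν] [SFinite η] {K1 : E → ℝ} {K2 : F → ℝ}

theorem integrable_snd_of_integrable_prod_mul
    (hK : Integrable (fun p : E × F => K1 p.1 * K2 p.2) (ν.prod η)) (hK1 : ¬ K1 =ᵐ[ν] 0) :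
    Integrable K2 η := by
  obtain ⟨u, hu, hint⟩ := ((Filter.not_eventually.1 hK1).and_eventually hK.prod_right_ae).exists
  exact (integrable_const_mul_iff (IsUnit.mk0 _ hu) K2).1 hint

theorem memLp_two_snd_of_integrable_sq_prod_mul
    (hKsq : Integrable (fun p : E × F => (K1 p.1 * K2 p.2) ^ 2) (ν.prod η))
    (hK1 : ∫ u, K1 u ∂ν ≠ 0) (hK2 : AEStronglyMeasurable K2 η) : MemLp K2 2 η := by
  have hK1sq : ¬ (fun u => K1 u ^ 2) =ᵐ[ν] 0 := fun hzero =>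
    hK1 (integral_eq_zero_of_ae (hzero.mono fun _ hu => pow_eq_zero_iff two_ne_zero |>.1 hu))
  simp only [mul_pow] at hKsq
  exact (memLp_two_iff_integrable_sq hK2).2 (integrable_snd_of_integrable_prod_mul hKsq hK1sq)

theorem memLp_two_fst_of_integrable_sq_prod_mul
    (hKsq : Integrable (fun p : E × F => (K1 p.1 * K2 p.2) ^ 2) (ν.prod η))
    (hK1 : AEStronglyMeasurable K1 ν) (hK2 : ∫ v, K2 v ∂η ≠ 0) : MemLp K1 2 ν :=
  memLp_two_snd_of_integrable_sq_prod_mul (K1 := K2) (K2 := K1)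
    (by simpa only [mul_comm] using! hKsq.swap) hK2 hK1

end ProductKernel

theorem abs_sub_mul_sub_le_two_mul_div {x s h A r : ℝ} (hs : |s| ≤ A) (hh : 0 < h)
    (hr : h ≤ 1 / r) : |x - s * h - x| ≤ 2 * A / r := by
  have hA : 0 ≤ A := (abs_nonneg s).trans hs
  calc |x - s * h - x| = |s| * h := by rw [sub_sub_cancel_left, abs_neg, abs_mul, abs_of_pos hh]
    _ ≤ A * (1 / r) := by gcongr
    _ ≤ 2 * A * (1 / r) := mul_le_mul_of_nonneg_right (by linarith) (hh.le.trans hr)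
    _ = 2 * A / r := mul_one_div _ _

theorem kernel_risk_lower_bound_general {Ω ι κ : Type*} [Fintype ι] [Fintype κ] [MeasurableSpace Ω]
    (P : Measure Ω) [IsProbabilityMeasure P] (n : ℕ) (hn : n ≠ 0)
    (X : Fin n → Ω → (ι → ℝ)) (Y : Fin n → Ω → (κ → ℝ))
    (hXmeas : ∀ i, Measurable (X i)) (hYmeas : ∀ i, Measurable (Y i))
    (fXY : (ι → ℝ) → (κ → ℝ) → ℝ) (hfXYmeas : Measurable (Function.uncurry fXY))
    (hfXYnonneg : ∀ u v, 0 ≤ fXY u v)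
    (hdens : ∀ i, Measure.map (fun ω => (X i ω, Y i ω)) P = jointLaw volume volume fXY)
    (hindep : Pairwise fun i j => IndepFun (fun ω => (X i ω, Y i ω)) (fun ω => (X j ω, Y j ω)) P)
    (x : ι → ℝ) (V : Set (ι → ℝ)) (hxV : x ∈ V) (S δ : ℝ) (hδpos : 0 < δ)
    (hS : ∀ t ∈ V, ∀ y, conditionalDensity volume fXY t y ≤ S)
    (hδ : ∀ t ∈ V, δ ≤ marginalDensity volume fXY t)
    (K1 : (ι → ℝ) → ℝ) (K2 : (κ → ℝ) → ℝ) (hK1 : Integrable K1) (hK2 : Integrable K2)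
    (hK1sq : MemLp K1 2) (hK2sq : MemLp K2 2)
    (h1 : ι → ℝ) (h2 : κ → ℝ) (hh1 : ∀ i, 0 < h1 i) (hh2 : ∀ j, 0 < h2 j)
    (hK1V : ∀ s, K1 s ≠ 0 → x - s * h1 ∈ V) :
    (∫ y, ((∫ u, ∫ v, dilate h1 K1 (x - u) * dilate h2 K2 (y - v)
          * conditionalDensity volume fXY u v) - conditionalDensity volume fXY x y) ^ 2)
      + (∫ v, K2 v ^ 2) / (n * ((∏ i, h1 i) * ∏ j, h2 j))
          * (∫ s, K1 s ^ 2 / marginalDensity volume fXY (x - s * h1))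
      - ((∫ u, |K1 u|) * ∫ v, |K2 v|) ^ 2 * S / n
    ≤ ∫ ω, (∫ y, ((n : ℝ)⁻¹ * ∑ i, dilate h1 K1 (x - X i ω) * dilate h2 K2 (y - Y i ω)
          / marginalDensity volume fXY (X i ω) - conditionalDensity volume fXY x y) ^ 2) ∂P := by
  have : Nonempty (Fin n) := Fin.pos_iff_nonempty.1 (Nat.pos_of_ne_zero hn)
  have hne1 (i : ι) : h1 i ≠ 0 := (hh1 i).ne'
  have hne2 (j : κ) : h2 j ≠ 0 := (hh2 j).ne'
  have hwindow (u : ι → ℝ) (hu : dilate h1 K1 (x - u) ≠ 0) : u ∈ V := by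
    have hcancel : (x - u) / h1 * h1 = x - u := funext fun i => div_mul_cancel₀ _ (hne1 i)
    simpa only [hcancel, sub_sub_cancel] using hK1V _ (right_ne_zero_of_mul hu)
  have hrisk := le_integral_integral_sq_sampleMean_div_marginalDensity_sub
    (W := fun i ω => (X i ω, Y i ω)) (w := fun u => dilate h1 K1 (x - u))
    (fun i => ⟨(hXmeas i).prodMk (hYmeas i), hdens i⟩) hindep hfXYmeas hfXYnonneg hδpos
    (fun u hu => hδ u (hwindow u hu)) (fun u v hu => hS u (hwindow u hu) v)
    ((integrable_dilate hne1 hK1).comp_sub_left x)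
    ((memLp_dilate hne1 hK1sq).comp_measurePreserving (volume.measurePreserving_sub_left x))
    (integrable_dilate hne2 hK2) (memLp_dilate hne2 hK2sq)
    (memLp_two_conditionalDensity (hfXYnonneg x) (hδpos.trans_le (hδ x hxV)) (hS x hxV))
  rw [integral_dilate_sub_sq_div hh1, integral_dilate_sq hh2,
    integral_sub_left_eq_self (fun u => |dilate h1 K1 u|) volume x, integral_abs_dilate hne1,
    integral_abs_dilate hne2, Fintype.card_fin] at hrisk
  refine (le_of_eq ?_).trans hrisk
  field_simp
  ring

/-- Proposition (lower bound for kernel rules), first part: a non-asymptotic lower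
bound on the risk `R_x²(f̂_h, 2)` of the kernel estimator built with the true
design density `f_X`. -/
theorem kernel_risk_lower_bound
    {Ω : Type*} [MeasurableSpace Ω] (P : Measure Ω) [IsProbabilityMeasure P]
    (d1 d2 : ℕ) (hd1 : 0 < d1) (hd2 : 0 < d2)
    (n : ℕ) (hn : 2 ≤ n)
    (X : Fin n → Ω → (Fin d1 → ℝ)) (Y : Fin n → Ω → (Fin d2 → ℝ))
    (hXmeas : ∀ i, Measurable (X i)) (hYmeas : ∀ i, Measurable (Y i))
    -- joint density of the i.i.d. observations
    (fXY : (Fin d1 → ℝ) → (Fin d2 → ℝ) → ℝ)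
    (hfXYmeas : Measurable (Function.uncurry fXY)) (hfXYnonneg : ∀ u v, 0 ≤ fXY u v)
    (hdens : ∀ i, Measure.map (fun ω => (X i ω, Y i ω)) P
      = (volume : Measure ((Fin d1 → ℝ) × (Fin d2 → ℝ))).withDensity
          (fun p => ENNReal.ofReal (fXY p.1 p.2)))
    (hiid : iIndepFun (fun i ω => (X i ω, Y i ω)) P)
    -- marginal and conditional densities
    (fX : (Fin d1 → ℝ) → ℝ) (hfX : ∀ u, fX u = ∫ v, fXY u v)
    (f : (Fin d1 → ℝ) → (Fin d2 → ℝ) → ℝ) (hf : ∀ u y, f u y = fXY u y / fX u)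
    -- the fixed point and the neighborhood V_n(x)
    (x : Fin d1 → ℝ) (A : ℝ) (hA : 0 < A) (kn : ℝ) (hkn : 1 ≤ kn)
    (Vn : Set (Fin d1 → ℝ)) (hVn : Vn = {t | ∀ i, |t i - x i| ≤ 2 * A / kn})
    -- (H1): `‖f‖_∞ < ∞`; (H3): `0 < δ ≤ 1`
    (Fsup : ℝ) (hFsup : IsLUB {r | ∃ t ∈ Vn, ∃ y, r = f t y} Fsup)
    (δ : ℝ) (hδ : IsGLB (fX '' Vn) δ) (hδpos : 0 < δ) (hδone : δ ≤ 1)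
    -- the kernel `K(u,v) = K⁽¹⁾(u)K⁽²⁾(v)`, with `K⁽¹⁾` supported in `[-A,A]^{d1}`
    (K : (Fin d1 → ℝ) → (Fin d2 → ℝ) → ℝ) (K1 : (Fin d1 → ℝ) → ℝ) (K2 : (Fin d2 → ℝ) → ℝ)
    (hKfact : ∀ u v, K u v = K1 u * K2 v)
    (hKmeas : Measurable (Function.uncurry K))
    (hKbdd : ∃ Mb : ℝ, ∀ u v, |K u v| ≤ Mb)
    (hKint : Integrable (fun p : (Fin d1 → ℝ) × (Fin d2 → ℝ) => K p.1 p.2))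
    (hKL2 : Integrable (fun p : (Fin d1 → ℝ) × (Fin d2 → ℝ) => (K p.1 p.2) ^ 2))
    (hKtotal : (∫ u, ∫ v, K u v) = 1)
    (hK1supp : ∀ u, (∃ i, A < |u i|) → K1 u = 0)
    -- `‖K‖₁` and `‖K⁽²⁾‖₂²`
    (nK1 : ℝ) (hnK1 : nK1 = ∫ u, ∫ v, |K u v|)
    (nK2sq : ℝ) (hnK2sq : nK2sq = ∫ v, (K2 v) ^ 2)
    -- the bandwidth `h`, with `h_i ≤ 1/k_n` for `i = 1,…,d1`
    (h : (Fin d1 → ℝ) × (Fin d2 → ℝ))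
    (hhpos : (∀ i, 0 < h.1 i) ∧ (∀ j, 0 < h.2 j))
    (hhkn : ∀ i, h.1 i ≤ 1 / kn)
    -- the dilated kernel, the estimator, and the convolution `K_h * f`
    (Kh : ((Fin d1 → ℝ) × (Fin d2 → ℝ)) → (Fin d1 → ℝ) → (Fin d2 → ℝ) → ℝ)
    (hKh : ∀ h' u v, Kh h' u v
      = ((∏ i, h'.1 i) * (∏ j, h'.2 j))⁻¹ * K (fun i => u i / h'.1 i) (fun j => v j / h'.2 j))
    (fhat : Ω → (Fin d2 → ℝ) → ℝ)
    (hfhat : ∀ ω y, fhat ω y = (n : ℝ)⁻¹ * ∑ i, Kh h (x - X i ω) (y - Y i ω) / fX (X i ω))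
    (Khf : (Fin d1 → ℝ) → (Fin d2 → ℝ) → ℝ)
    (hKhf : ∀ t y, Khf t y = ∫ u, ∫ v, Kh h (t - u) (y - v) * f u v) :
    -- conclusion: lower bound for `R_x²(f̂_h, 2) = E‖f̂_h − f‖²_{x,2}`
    (∫ y, (Khf x y - f x y) ^ 2)
      + nK2sq / (n * ((∏ i, h.1 i) * (∏ j, h.2 j)))
          * (∫ s, (K1 s) ^ 2 / fX (fun i => x i - s i * h.1 i))
      - nK1 ^ 2 * Fsup / n
    ≤ ∫ ω, (∫ y, (fhat ω y - f x y) ^ 2) ∂P := by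
  obtain rfl : fX = marginalDensity volume fXY := funext hfX
  obtain rfl : f = conditionalDensity volume fXY := funext₂ hf
  have hKh_dilate (u v) : Kh h u v = dilate h.1 K1 u * dilate h.2 K2 v := by
    rw [hKh, hKfact, dilate, dilate, mul_inv, mul_mul_mul_comm]
    rfl
  have hV {t} (ht : ∀ i, |t i - x i| ≤ 2 * A / kn) : t ∈ Vn := hVn ▸ ht
  have hxV : x ∈ Vn := hV fun i => by rw [sub_self, abs_zero]; positivity
  have hwindow (s) (hs : K1 s ≠ 0) : x - s * h.1 ∈ Vn := hV fun i =>
    abs_sub_mul_sub_le_two_mul_div (not_lt.1 fun hi => hs (hK1supp s ⟨i, hi⟩)) (hhpos.1 i) (hhkn i)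
  simp only [hKfact, abs_mul, integral_const_mul, integral_mul_const] at hKL2 hKtotal hnK1
  obtain ⟨hK1, hK2⟩ := ne_zero_and_ne_zero_of_mul (hKtotal.trans_ne one_ne_zero)
  have hK1int : Integrable K1 := .of_integral_ne_zero hK1
  have hK2int : Integrable K2 := .of_integral_ne_zero hK2
  have hrisk := kernel_risk_lower_bound_general P n (by lia) X Y hXmeas hYmeas fXY hfXYmeas
    hfXYnonneg hdens (fun i j hij => hiid.indepFun hij) x Vn hxV Fsup δ hδpos
    (fun t ht y => hFsup.1 ⟨t, ht, y, rfl⟩) (fun t ht => hδ.1 ⟨t, ht, rfl⟩) K1 K2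
    hK1int hK2int (memLp_two_fst_of_integrable_sq_prod_mul hKL2 hK1int.1 hK2)
    (memLp_two_snd_of_integrable_sq_prod_mul hKL2 hK1 hK2int.1) h.1 h.2 hhpos.1 hhpos.2 hwindow
  simpa only [hfhat, hKhf, hKh_dilate, hnK1, hnK2sq] using! hrisk
end

section
/- (Talagrand inequality, Birgé–Massart form.) Let U₁,…,U_n be i.i.d. random variables with values in a measurable space, let 𝒜 be a countable set of measurable real-valued functions τ_a, and set ν_n(a) = n^{−1} Σ_{i=1}^n [τ_a(U_i) − E(τ_a(U_i))]. Suppose sup_{a∈𝒜} sup_u |τ_a(u)| ≤ M, E[sup_{a∈𝒜} |ν_n(a)|] ≤ H, and sup_{a∈𝒜} Var(τ_a(U₁)) ≤ v. Then for any ζ > 0, P( sup_{a∈𝒜} |ν_n(a)| ≥ (1+2ζ)H ) ≤ 2 max( exp( −(ζ²/6)·nH²/v ), exp( −(min(ζ,1)ζ/21)·nH/M ) ). -/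
open MeasureTheory ProbabilityTheory

/-!
The proof is the entropy method. Let `Z` be the supremum of the absolute sums, rescaled so that the
summands are bounded by `1`, and let `W k` be the same supremum with the `k`-th summand left out.
Subadditivity of entropy, in the variational form that allows any comparison function not depending
on the `k`-th coordinate, bounds `Ent (exp (t Z))` by a sum of Bregman divergences between `t Z` and
`t W k`. Since `Z - W k ≤ 1`, `∑ k, (Z - W k) ≤ Z`, and the conditional second moment of `Z - W k`
is at most `s k + 2 E_k (Z - W k)`, this yields a differential inequality for the cumulant
generating function of `Z`. Integrating it (Herbst's argument) gives a sub-gamma bound with variance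
factor `∑ k, s k + 2 E Z`, and Chernoff's bound gives the tail.
-/

/-- Measurable real functions that are bounded everywhere. Every integrand below belongs to this
class, whose closure properties are registered with `fun_prop` so that integrability is routine. -/
@[fun_prop]
structure BoundedMeasurable {X : Type*} [MeasurableSpace X] (f : X → ℝ) : Prop where
  measurable : Measurable f
  bounded : ∃ C, ∀ x, |f x| ≤ C

namespace BoundedMeasurable

variable {X Y : Type*} [MeasurableSpace X] [MeasurableSpace Y] {f g : X → ℝ}

lemma integrable (hf : BoundedMeasurable f) {μ : Measure X} [IsFiniteMeasure μ] :
    Integrable f μ := by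
  obtain ⟨C, hC⟩ := hf.bounded
  exact .of_bound hf.measurable.aestronglyMeasurable C (.of_forall hC)

@[fun_prop]
lemma const (c : ℝ) : BoundedMeasurable fun _ : X => c :=
  ⟨measurable_const, |c|, fun _ => le_rfl⟩

@[fun_prop]
lemma add (hf : BoundedMeasurable f) (hg : BoundedMeasurable g) :
    BoundedMeasurable fun x => f x + g x := by
  obtain ⟨C, hC⟩ := hf.bounded
  obtain ⟨D, hD⟩ := hg.bounded
  exact ⟨hf.measurable.add hg.measurable, C + D,
    fun x => (abs_add_le _ _).trans (add_le_add (hC x) (hD x))⟩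

@[fun_prop]
lemma mul (hf : BoundedMeasurable f) (hg : BoundedMeasurable g) :
    BoundedMeasurable fun x => f x * g x := by
  obtain ⟨C, hC⟩ := hf.bounded
  obtain ⟨D, hD⟩ := hg.bounded
  refine ⟨hf.measurable.mul hg.measurable, C * D, fun x => ?_⟩
  rw [abs_mul]
  exact mul_le_mul (hC x) (hD x) (abs_nonneg _) ((abs_nonneg _).trans (hC x))

@[fun_prop]
lemma sub (hf : BoundedMeasurable f) (hg : BoundedMeasurable g) :
    BoundedMeasurable fun x => f x - g x := by
  simpa only [sub_eq_add_neg, neg_one_mul] using hf.add ((const (-1)).mul hg)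

@[fun_prop]
lemma pow (hf : BoundedMeasurable f) (n : ℕ) : BoundedMeasurable fun x => f x ^ n := by
  obtain ⟨C, hC⟩ := hf.bounded
  refine ⟨hf.measurable.pow_const n, C ^ n, fun x => ?_⟩
  rw [abs_pow]
  exact pow_le_pow_left₀ (abs_nonneg _) (hC x) n

@[fun_prop]
lemma exp (hf : BoundedMeasurable f) : BoundedMeasurable fun x => Real.exp (f x) := by
  obtain ⟨C, hC⟩ := hf.bounded
  refine ⟨hf.measurable.exp, Real.exp C, fun x => ?_⟩
  rw [Real.abs_exp]
  exact Real.exp_le_exp.2 ((le_abs_self _).trans (hC x))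

@[fun_prop]
lemma sum {ι : Type*} {s : Finset ι} {F : ι → X → ℝ} (hF : ∀ i, BoundedMeasurable (F i)) :
    BoundedMeasurable fun x => ∑ i ∈ s, F i x := by
  classical
  induction s using Finset.induction_on with
  | empty => simpa only [Finset.sum_empty] using const 0
  | insert i s hi ih => simpa only [Finset.sum_insert hi] using (hF i).add ih

lemma comp (hf : BoundedMeasurable f) {φ : Y → X} (hφ : Measurable φ) :
    BoundedMeasurable fun y => f (φ y) :=
  ⟨hf.measurable.comp hφ, hf.bounded.imp fun _ hC y => hC (φ y)⟩

lemma integral_prod_right {h : X × Y → ℝ} (hh : BoundedMeasurable h) (μ : Measure Y)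
    [IsProbabilityMeasure μ] : BoundedMeasurable fun x => ∫ y, h (x, y) ∂μ := by
  obtain ⟨C, hC⟩ := hh.bounded
  refine ⟨hh.measurable.stronglyMeasurable.integral_prod_right'.measurable, C, fun x => ?_⟩
  simpa using norm_integral_le_of_norm_le_const (μ := μ) (f := fun y => h (x, y))
    (.of_forall fun y => hC (x, y))

lemma log_integral_exp_prod_right {h : X × Y → ℝ} (hh : BoundedMeasurable h) (μ : Measure Y)
    [IsProbabilityMeasure μ] :
    BoundedMeasurable fun x => Real.log (∫ y, Real.exp (h (x, y)) ∂μ) := by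
  refine ⟨(hh.exp.integral_prod_right μ).measurable.log, ?_⟩
  obtain ⟨C, hC⟩ := hh.bounded
  refine ⟨C, fun x => abs_le.2 ?_⟩
  have hint : Integrable (fun y => Real.exp (h (x, y))) μ :=
    (hh.exp.comp measurable_prodMk_left).integrable
  have hpos : 0 < ∫ y, Real.exp (h (x, y)) ∂μ := integral_exp_pos hint
  have lower : Real.exp (-C) ≤ ∫ y, Real.exp (h (x, y)) ∂μ := by
    simpa using integral_mono (integrable_const (Real.exp (-C))) hint
      fun y => Real.exp_le_exp.2 (abs_le.1 (hC (x, y))).1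
  have upper : ∫ y, Real.exp (h (x, y)) ∂μ ≤ Real.exp C := by
    simpa using integral_mono hint (integrable_const (Real.exp C))
      fun y => Real.exp_le_exp.2 (abs_le.1 (hC (x, y))).2
  exact ⟨(Real.le_log_iff_exp_le hpos).2 lower, (Real.log_le_iff_le_exp hpos).2 upper⟩

lemma iSup_abs {ι : Type*} [Countable ι] [Nonempty ι] {F : ι → X → ℝ} {C : ℝ}
    (hF : ∀ a, Measurable (F a)) (hC : ∀ a x, |F a x| ≤ C) :
    BoundedMeasurable fun x => ⨆ a, |F a x| := by
  refine ⟨Measurable.iSup fun a => (hF a).abs, C, fun x => ?_⟩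
  rw [abs_of_nonneg (Real.iSup_nonneg fun a => abs_nonneg _)]
  exact ciSup_le fun a => hC a x

end BoundedMeasurable

section CoordinateAverages

variable {κ : Type*} [DecidableEq κ] {X : κ → Type*} [∀ i, MeasurableSpace (X i)]

/-- The function obtained from `g` by integrating out the single coordinate `k`. -/
noncomputable def coordAverage (μ : ∀ i, Measure (X i)) (k : κ) (g : (∀ i, X i) → ℝ)
    (x : ∀ i, X i) : ℝ :=
  ∫ y, g (Function.update x k y) ∂μ k

/-- The function obtained from `g` by integrating out the coordinates in `s`, the real-valued
analogue of `MeasureTheory.lmarginal`. The integral runs over all coordinates, those outside `s`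
being ignored by the integrand. -/
noncomputable def partialAverage [Fintype κ] (μ : ∀ i, Measure (X i)) (s : Finset κ)
    (g : (∀ i, X i) → ℝ) (x : ∀ i, X i) : ℝ :=
  ∫ y, g (s.piecewise y x) ∂Measure.pi μ

variable (μ : ∀ i, Measure (X i)) {g u : (∀ i, X i) → ℝ} {s : Finset κ} {k : κ}

lemma coordAverage_mul_of_dependsOn (hu : DependsOn u {k}ᶜ) (x : ∀ i, X i) :
    coordAverage μ k (fun x => u x * g x) x = u x * coordAverage μ k g x := by
  have hux (y : X k) : u (Function.update x k y) = u x :=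
    hu fun i hi => Function.update_of_ne hi _ _
  simp only [coordAverage, hux, integral_const_mul]

lemma measurable_finset_piecewise (s : Finset κ) :
    Measurable fun p : (∀ i, X i) × (∀ i, X i) => s.piecewise p.2 p.1 := by
  refine measurable_pi_iff.2 fun i => ?_
  by_cases hi : i ∈ s
  · simp only [Finset.piecewise_eq_of_mem _ _ _ hi]
    exact (measurable_pi_apply i).comp measurable_snd
  · simp only [Finset.piecewise_eq_of_notMem _ _ _ hi]
    exact (measurable_pi_apply i).comp measurable_fst

lemma dependsOn_partialAverage [Fintype κ] (s : Finset κ) :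
    DependsOn (partialAverage μ s g) (↑s : Set κ)ᶜ := fun x x' hxx' => by
  have piecewise_eq (y : ∀ i, X i) : s.piecewise y x = s.piecewise y x' :=
    s.piecewise_congr (fun _ _ => rfl) fun i hi => hxx' i (by simpa using hi)
  simp only [partialAverage, piecewise_eq]

lemma partialAverage_univ [Fintype κ] (x : ∀ i, X i) :
    partialAverage μ Finset.univ g x = ∫ y, g y ∂Measure.pi μ := by
  simp only [partialAverage, Finset.piecewise_univ]

variable [∀ i, IsProbabilityMeasure (μ i)]

@[fun_prop]
lemma BoundedMeasurable.coordAverage (hg : BoundedMeasurable g) :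
    BoundedMeasurable (coordAverage μ k g) :=
  (hg.comp measurable_update').integral_prod_right (μ k)

variable [Fintype κ]

lemma measurePreserving_update (k : κ) :
    MeasurePreserving (fun p : (∀ i, X i) × X k => Function.update p.1 k p.2)
      ((Measure.pi μ).prod (μ k)) (Measure.pi μ) := by
  refine ⟨measurable_update', (Measure.pi_eq fun s hs => ?_).symm⟩
  have preimage_eq : (fun p : (∀ i, X i) × X k => Function.update p.1 k p.2) ⁻¹' Set.univ.pi s
      = Set.univ.pi (Function.update s k Set.univ) ×ˢ s k := by
    ext p
    have update_point : (∀ i, Function.update p.1 k p.2 i ∈ s i) ↔ _ :=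
      Function.forall_update_iff p.1 (p := fun i z => z ∈ s i)
    have update_set : (∀ i, p.1 i ∈ Function.update s k Set.univ i) ↔ _ :=
      Function.forall_update_iff s (p := fun i t => p.1 i ∈ t)
    simp only [Set.mem_preimage, Set.mem_prod, Set.mem_univ_pi, update_point, update_set,
      Set.mem_univ, true_and, and_comm]
  rw [Measure.map_apply measurable_update' (.univ_pi hs), preimage_eq, Measure.prod_prod,
    Measure.pi_pi, ← Finset.prod_erase_mul _ _ (Finset.mem_univ k),
    ← Finset.prod_erase_mul Finset.univ (fun i => μ i (s i)) (Finset.mem_univ k),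
    Function.update_self, measure_univ, mul_one]
  congr 1
  exact Finset.prod_congr rfl fun i hi => by
    rw [Function.update_of_ne (Finset.ne_of_mem_erase hi)]

lemma integral_coordAverage (hg : BoundedMeasurable g) :
    ∫ x, coordAverage μ k g x ∂Measure.pi μ = ∫ x, g x ∂Measure.pi μ := by
  have hupdate := measurePreserving_update μ k
  rw [← hupdate.map_eq, integral_map hupdate.measurable.aemeasurable
    hg.measurable.aestronglyMeasurable, integral_prod _ (hg.comp hupdate.measurable).integrable,
    hupdate.map_eq]
  rfl

lemma integral_mul_coordAverage (hu : BoundedMeasurable u) (hdep : DependsOn u {k}ᶜ)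
    (hg : BoundedMeasurable g) :
    ∫ x, u x * coordAverage μ k g x ∂Measure.pi μ = ∫ x, u x * g x ∂Measure.pi μ := by
  simp only [← coordAverage_mul_of_dependsOn μ hdep]
  exact integral_coordAverage μ (hu.mul hg)

lemma partialAverage_empty : partialAverage μ ∅ g = g := by
  ext x
  simp [partialAverage]

lemma coordAverage_partialAverage (hg : BoundedMeasurable g) (hk : k ∉ s) :
    coordAverage μ k (partialAverage μ s g) = partialAverage μ (insert k s) g := by
  ext x
  have hupdate := measurePreserving_update μ k
  have hpiecewise : BoundedMeasurable fun y => g ((insert k s).piecewise y x) :=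
    hg.comp ((measurable_finset_piecewise _).comp measurable_prodMk_left)
  have piecewise_update (y : ∀ i, X i) (z : X k) :
      (insert k s).piecewise (Function.update y k z) x
        = s.piecewise y (Function.update x k z) := by
    rw [Finset.piecewise_insert, Function.update_self, s.update_piecewise_of_notMem _ _ hk]
    exact s.piecewise_congr
      (fun i hi => Function.update_of_ne (ne_of_mem_of_not_mem hi hk) _ _) fun _ _ => rfl
  symm
  rw [partialAverage, ← hupdate.map_eq, integral_map hupdate.measurable.aemeasurable
    hpiecewise.measurable.aestronglyMeasurable,
    integral_prod_symm _ (hpiecewise.comp hupdate.measurable).integrable]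
  simp only [piecewise_update]
  rfl

lemma partialAverage_exp_pos (hg : BoundedMeasurable g) (s : Finset κ) (x : ∀ i, X i) :
    0 < partialAverage μ s (fun x => Real.exp (g x)) x :=
  integral_exp_pos
    (hg.exp.comp ((measurable_finset_piecewise s).comp measurable_prodMk_left)).integrable

@[fun_prop]
lemma BoundedMeasurable.log_partialAverage_exp (hg : BoundedMeasurable g) (s : Finset κ) :
    BoundedMeasurable fun x => Real.log (partialAverage μ s (fun x => Real.exp (g x)) x) :=
  (hg.comp (measurable_finset_piecewise s)).log_integral_exp_prod_right (Measure.pi μ)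

end CoordinateAverages

section Entropy

/-- The Bregman divergence of the exponential function, that is, the amount by which `exp b` exceeds
the tangent of `exp` at `a`. -/
noncomputable def expBregman (a b : ℝ) : ℝ :=
  Real.exp b - Real.exp a - Real.exp a * (b - a)

/-- The entropy `E[exp Z log exp Z] - E[exp Z] log E[exp Z]` of `exp Z`, written as one integral. -/
noncomputable def expEntropy {X : Type*} [MeasurableSpace X] (Z : X → ℝ) (ρ : Measure X) : ℝ :=
  ∫ x, Real.exp (Z x) * (Z x - Real.log (∫ y, Real.exp (Z y) ∂ρ)) ∂ρ

lemma exp_mul_le_expBregman_add (a b y : ℝ) :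
    Real.exp a * y ≤ expBregman a b + Real.exp b * (Real.exp y - 1) := by
  have tangent : Real.exp a * (b + y - a + 1) ≤ Real.exp b * Real.exp y := by
    rw [← Real.exp_add, ← sub_add_cancel (b + y) a, Real.exp_add, mul_comm, sub_add_cancel]
    exact mul_le_mul_of_nonneg_right (Real.add_one_le_exp _) (Real.exp_pos a).le
  unfold expBregman
  linarith

lemma expBregman_le_of_sub_le_one {a b : ℝ} (hab : a - b ≤ 1) :
    expBregman a b ≤ Real.exp b * (a - b) ^ 2 := by
  have exp_eq : Real.exp a = Real.exp b * Real.exp (a - b) := by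
    rw [← Real.exp_add, add_sub_cancel]
  have tangent : 0 ≤ (1 - (a - b)) * (Real.exp (a - b) - (a - b + 1)) :=
    mul_nonneg (sub_nonneg.2 hab) (sub_nonneg.2 (Real.add_one_le_exp _))
  rw [expBregman, exp_eq]
  linarith [mul_nonneg (Real.exp_pos b).le tangent]

@[fun_prop]
lemma BoundedMeasurable.expBregman {X : Type*} [MeasurableSpace X] {f g : X → ℝ}
    (hf : BoundedMeasurable f) (hg : BoundedMeasurable g) :
    BoundedMeasurable fun x => expBregman (f x) (g x) := by
  unfold _root_.expBregman
  fun_prop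

variable {κ : Type*} [Fintype κ] [DecidableEq κ] {X : κ → Type*} [∀ i, MeasurableSpace (X i)]
  (μ : ∀ i, Measure (X i)) [∀ i, IsProbabilityMeasure (μ i)] {Z : (∀ i, X i) → ℝ}

lemma integral_exp_mul_le_integral_expBregman {k : κ} {V h : (∀ i, X i) → ℝ}
    (hZ : BoundedMeasurable Z) (hV : BoundedMeasurable V) (hdep : DependsOn V {k}ᶜ)
    (hh : BoundedMeasurable h) (hone : ∀ x, coordAverage μ k (fun x => Real.exp (h x)) x = 1) :
    ∫ x, Real.exp (Z x) * h x ∂Measure.pi μ ≤ ∫ x, expBregman (Z x) (V x) ∂Measure.pi μ := by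
  have exp_dep : DependsOn (fun x => Real.exp (V x)) {k}ᶜ := fun _ _ hxy =>
    congrArg Real.exp (hdep hxy)
  have correction_eq_zero :
      ∫ x, Real.exp (V x) * (Real.exp (h x) - 1) ∂Measure.pi μ = 0 := by
    simp only [mul_sub, mul_one]
    rw [integral_sub (BoundedMeasurable.integrable (by fun_prop)) hV.exp.integrable,
      ← integral_mul_coordAverage μ hV.exp exp_dep hh.exp]
    simp only [hone, mul_one, sub_self]
  calc ∫ x, Real.exp (Z x) * h x ∂Measure.pi μ
      ≤ ∫ x, (expBregman (Z x) (V x) + Real.exp (V x) * (Real.exp (h x) - 1)) ∂Measure.pi μ :=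
        integral_mono (BoundedMeasurable.integrable (by fun_prop))
          (BoundedMeasurable.integrable (by fun_prop))
          fun x => exp_mul_le_expBregman_add (Z x) (V x) (h x)
    _ = ∫ x, expBregman (Z x) (V x) ∂Measure.pi μ := by
        rw [integral_add (hZ.expBregman hV).integrable
          (BoundedMeasurable.integrable (by fun_prop)), correction_eq_zero, add_zero]

lemma coordAverage_exp_log_partialAverage_sub (hZ : BoundedMeasurable Z) {s : Finset κ} {k : κ}
    (hk : k ∉ s) (x : ∀ i, X i) :
    coordAverage μ k (fun x => Real.exp
      (Real.log (partialAverage μ s (fun x => Real.exp (Z x)) x)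
        - Real.log (partialAverage μ (insert k s) (fun x => Real.exp (Z x)) x))) x = 1 := by
  have pos (s : Finset κ) := partialAverage_exp_pos μ hZ s
  have inv_dep : DependsOn
      (fun x => (partialAverage μ (insert k s) (fun x => Real.exp (Z x)) x)⁻¹) {k}ᶜ :=
    fun _ _ hxy => congrArg (·⁻¹)
      ((dependsOn_partialAverage μ (insert k s)).mono (by simp) hxy)
  simp only [Real.exp_sub, Real.exp_log (pos _ _), div_eq_inv_mul]
  rw [coordAverage_mul_of_dependsOn μ inv_dep, coordAverage_partialAverage μ hZ.exp hk,
    inv_mul_cancel₀ (pos _ _).ne']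

variable {W : κ → (∀ i, X i) → ℝ}

lemma integral_exp_mul_sub_log_partialAverage_le (hZ : BoundedMeasurable Z)
    (hW : ∀ k, BoundedMeasurable (W k)) (hdep : ∀ k, DependsOn (W k) {k}ᶜ) (s : Finset κ) :
    ∫ x, Real.exp (Z x) * (Z x - Real.log (partialAverage μ s (fun x => Real.exp (Z x)) x))
        ∂Measure.pi μ
      ≤ ∑ k ∈ s, ∫ x, expBregman (Z x) (W k x) ∂Measure.pi μ := by
  induction s using Finset.induction_on with
  | empty => simp [partialAverage_empty]
  | insert k s hk ih =>
    set L : Finset κ → (∀ i, X i) → ℝ :=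
      fun s x => Real.log (partialAverage μ s (fun x => Real.exp (Z x)) x)
    have hL (s : Finset κ) : BoundedMeasurable (L s) := hZ.log_partialAverage_exp μ s
    calc ∫ x, Real.exp (Z x) * (Z x - L (insert k s) x) ∂Measure.pi μ
        = ∫ x, Real.exp (Z x) * (L s x - L (insert k s) x) ∂Measure.pi μ
          + ∫ x, Real.exp (Z x) * (Z x - L s x) ∂Measure.pi μ := by
          rw [← integral_add (BoundedMeasurable.integrable (by fun_prop))
            (BoundedMeasurable.integrable (by fun_prop))]
          congr with x
          ring
      _ ≤ _ := by
          rw [Finset.sum_insert hk]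
          exact add_le_add (integral_exp_mul_le_integral_expBregman μ hZ (hW k) (hdep k)
            ((hL s).sub (hL _)) (coordAverage_exp_log_partialAverage_sub μ hZ hk)) ih

omit [DecidableEq κ] in
theorem expEntropy_le_sum_integral_expBregman (hZ : BoundedMeasurable Z)
    (hW : ∀ k, BoundedMeasurable (W k)) (hdep : ∀ k, DependsOn (W k) {k}ᶜ) :
    expEntropy Z (Measure.pi μ) ≤ ∑ k, ∫ x, expBregman (Z x) (W k x) ∂Measure.pi μ := by
  classical
  simpa only [expEntropy, partialAverage_univ] using
    integral_exp_mul_sub_log_partialAverage_le μ hZ hW hdep Finset.univ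

end Entropy

section SelfBounding

variable {κ : Type*} [DecidableEq κ] {X : κ → Type*} [∀ i, MeasurableSpace (X i)]

/-- The self-bounding property of a function `Z` of independent coordinates that drives the entropy
method: `W k` is a version of `Z` that ignores the `k`-th coordinate, the increments `Z - W k` are
at most `1` and add up to at most `Z`, and their conditional second moments are controlled by `s k`
and, with slope `b`, by their nonnegative conditional means. The increments themselves may be
negative. -/
structure IsSelfBounding [Fintype κ] (μ : ∀ i, Measure (X i)) (Z : (∀ i, X i) → ℝ)
    (W : κ → (∀ i, X i) → ℝ) (s : κ → ℝ) (b : ℝ) : Prop where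
  boundedMeasurable : BoundedMeasurable Z
  boundedMeasurable_omit : ∀ k, BoundedMeasurable (W k)
  dependsOn_omit : ∀ k, DependsOn (W k) {k}ᶜ
  sub_le_one : ∀ k x, Z x - W k x ≤ 1
  sum_sub_le : ∀ x, ∑ k, (Z x - W k x) ≤ Z x
  coordAverage_sub_nonneg : ∀ k x, 0 ≤ coordAverage μ k (fun x => Z x - W k x) x
  coordAverage_sq_le : ∀ k x, coordAverage μ k (fun x => (Z x - W k x) ^ 2) x
    ≤ s k + b * coordAverage μ k (fun x => Z x - W k x) x

variable {μ : ∀ i, Measure (X i)}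

lemma coordAverage_const_mul (k : κ) (c : ℝ) (g : (∀ i, X i) → ℝ) (x : ∀ i, X i) :
    coordAverage μ k (fun x => c * g x) x = c * coordAverage μ k g x :=
  coordAverage_mul_of_dependsOn μ (fun _ _ _ => rfl) x

variable [Fintype κ]

lemma IsSelfBounding.const_mul {Z : (∀ i, X i) → ℝ} {W : κ → (∀ i, X i) → ℝ} {s : κ → ℝ} {b : ℝ}
    (h : IsSelfBounding μ Z W s b) {t : ℝ} (ht0 : 0 ≤ t) (ht1 : t ≤ 1) :
    IsSelfBounding μ (fun x => t * Z x) (fun k x => t * W k x) (fun k => t ^ 2 * s k)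
      (t * b) where
  boundedMeasurable := (BoundedMeasurable.const t).mul h.boundedMeasurable
  boundedMeasurable_omit k := (BoundedMeasurable.const t).mul (h.boundedMeasurable_omit k)
  dependsOn_omit k _ _ hxy := congrArg (t * ·) (h.dependsOn_omit k hxy)
  sub_le_one k x := by
    rw [← mul_sub]
    exact (mul_le_of_le_one_right ht0 (h.sub_le_one k x)).trans ht1
  sum_sub_le x := by
    simp only [← mul_sub, ← Finset.mul_sum]
    exact mul_le_mul_of_nonneg_left (h.sum_sub_le x) ht0
  coordAverage_sub_nonneg k x := by
    simp only [← mul_sub, coordAverage_const_mul]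
    exact mul_nonneg ht0 (h.coordAverage_sub_nonneg k x)
  coordAverage_sq_le k x := by
    simp only [← mul_sub, mul_pow, coordAverage_const_mul]
    linarith [mul_le_mul_of_nonneg_left (h.coordAverage_sq_le k x) (sq_nonneg t)]

variable [∀ i, IsProbabilityMeasure (μ i)]

section Coordinate

variable {Z V : (∀ i, X i) → ℝ} {k : κ} (hZ : BoundedMeasurable Z) (hV : BoundedMeasurable V)
  (hdep : DependsOn V {k}ᶜ)

include hZ hV hdep

lemma integral_exp_mul_sub_nonneg (hmean : ∀ x, 0 ≤ coordAverage μ k (fun x => Z x - V x) x) :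
    0 ≤ ∫ x, Real.exp (V x) * (Z x - V x) ∂Measure.pi μ := by
  rw [← integral_mul_coordAverage μ hV.exp (fun _ _ hxy => congrArg Real.exp (hdep hxy))
    (hZ.sub hV)]
  exact integral_nonneg fun x => mul_nonneg (Real.exp_pos _).le (hmean x)

lemma integral_exp_le_integral_exp (hmean : ∀ x, 0 ≤ coordAverage μ k (fun x => Z x - V x) x) :
    ∫ x, Real.exp (V x) ∂Measure.pi μ ≤ ∫ x, Real.exp (Z x) ∂Measure.pi μ :=
  calc ∫ x, Real.exp (V x) ∂Measure.pi μ
      ≤ ∫ x, Real.exp (V x) ∂Measure.pi μ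
          + ∫ x, Real.exp (V x) * (Z x - V x) ∂Measure.pi μ :=
        le_add_of_nonneg_right (integral_exp_mul_sub_nonneg hZ hV hdep hmean)
    _ = ∫ x, (Real.exp (V x) + Real.exp (V x) * (Z x - V x)) ∂Measure.pi μ :=
        (integral_add hV.exp.integrable (BoundedMeasurable.integrable (by fun_prop))).symm
    _ ≤ ∫ x, Real.exp (Z x) ∂Measure.pi μ := by
        refine integral_mono (BoundedMeasurable.integrable (by fun_prop)) hZ.exp.integrable
          fun x => ?_
        calc Real.exp (V x) + Real.exp (V x) * (Z x - V x)
            = Real.exp (V x) * (Z x - V x + 1) := by ring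
          _ ≤ Real.exp (V x) * Real.exp (Z x - V x) :=
              mul_le_mul_of_nonneg_left (Real.add_one_le_exp _) (Real.exp_pos _).le
          _ = Real.exp (Z x) := by rw [← Real.exp_add, add_sub_cancel]

lemma integral_exp_mul_sq_le {a b : ℝ}
    (hsq : ∀ x, coordAverage μ k (fun x => (Z x - V x) ^ 2) x
      ≤ a + b * coordAverage μ k (fun x => Z x - V x) x) :
    ∫ x, Real.exp (V x) * (Z x - V x) ^ 2 ∂Measure.pi μ
      ≤ a * ∫ x, Real.exp (V x) ∂Measure.pi μ
        + b * ∫ x, Real.exp (V x) * (Z x - V x) ∂Measure.pi μ := by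
  have exp_dep : DependsOn (fun x => Real.exp (V x)) {k}ᶜ := fun _ _ hxy =>
    congrArg Real.exp (hdep hxy)
  have hD := hZ.sub hV
  rw [← integral_mul_coordAverage μ hV.exp exp_dep hD,
    ← integral_mul_coordAverage μ hV.exp exp_dep (hD.pow 2), ← integral_const_mul,
    ← integral_const_mul, ← integral_add (BoundedMeasurable.integrable (by fun_prop))
      (BoundedMeasurable.integrable (by fun_prop))]
  refine integral_mono (BoundedMeasurable.integrable (by fun_prop))
    (BoundedMeasurable.integrable (by fun_prop)) fun x => ?_
  linarith [mul_le_mul_of_nonneg_left (hsq x) (Real.exp_pos (V x)).le]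

lemma integral_expBregman_le {a b : ℝ} (ha : 0 ≤ a) (hb : 0 ≤ b) (hone : ∀ x, Z x - V x ≤ 1)
    (hmean : ∀ x, 0 ≤ coordAverage μ k (fun x => Z x - V x) x)
    (hsq : ∀ x, coordAverage μ k (fun x => (Z x - V x) ^ 2) x
      ≤ a + b * coordAverage μ k (fun x => Z x - V x) x) :
    ∫ x, expBregman (Z x) (V x) ∂Measure.pi μ
      ≤ a * ∫ x, Real.exp (Z x) ∂Measure.pi μ
        + b * ∫ x, (Z x - V x) * Real.exp (Z x) ∂Measure.pi μ := by
  have tilted_mono : ∫ x, Real.exp (V x) * (Z x - V x) ∂Measure.pi μ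
      ≤ ∫ x, (Z x - V x) * Real.exp (Z x) ∂Measure.pi μ :=
    integral_mono (BoundedMeasurable.integrable (by fun_prop))
      (BoundedMeasurable.integrable (by fun_prop)) fun x => by
        rcases le_total (V x) (Z x) with hVZ | hZV
        · nlinarith [Real.exp_le_exp.2 hVZ]
        · nlinarith [Real.exp_le_exp.2 hZV]
  calc ∫ x, expBregman (Z x) (V x) ∂Measure.pi μ
      ≤ ∫ x, Real.exp (V x) * (Z x - V x) ^ 2 ∂Measure.pi μ :=
        integral_mono (hZ.expBregman hV).integrable (BoundedMeasurable.integrable (by fun_prop))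
          fun x => expBregman_le_of_sub_le_one (hone x)
    _ ≤ a * ∫ x, Real.exp (V x) ∂Measure.pi μ
          + b * ∫ x, Real.exp (V x) * (Z x - V x) ∂Measure.pi μ :=
        integral_exp_mul_sq_le hZ hV hdep hsq
    _ ≤ _ := add_le_add
        (mul_le_mul_of_nonneg_left (integral_exp_le_integral_exp hZ hV hdep hmean) ha)
        (mul_le_mul_of_nonneg_left tilted_mono hb)

end Coordinate

namespace IsSelfBounding

variable {Z : (∀ i, X i) → ℝ} {W : κ → (∀ i, X i) → ℝ} {s : κ → ℝ} {b : ℝ}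

lemma expEntropy_le (h : IsSelfBounding μ Z W s b) (hs : ∀ k, 0 ≤ s k) (hb : 0 ≤ b) :
    expEntropy Z (Measure.pi μ)
      ≤ (∑ k, s k) * ∫ x, Real.exp (Z x) ∂Measure.pi μ
        + b * ∫ x, Z x * Real.exp (Z x) ∂Measure.pi μ := by
  have hZ := h.boundedMeasurable
  have hW := h.boundedMeasurable_omit
  have sum_increments : ∑ k, ∫ x, (Z x - W k x) * Real.exp (Z x) ∂Measure.pi μ
      ≤ ∫ x, Z x * Real.exp (Z x) ∂Measure.pi μ := by
    rw [← integral_finsetSum _ fun k _ => BoundedMeasurable.integrable (by fun_prop)]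
    refine integral_mono (BoundedMeasurable.integrable (by fun_prop))
      (BoundedMeasurable.integrable (by fun_prop)) fun x => ?_
    simp only [← Finset.sum_mul]
    exact mul_le_mul_of_nonneg_right (h.sum_sub_le x) (Real.exp_pos _).le
  calc expEntropy Z (Measure.pi μ)
      ≤ ∑ k, ∫ x, expBregman (Z x) (W k x) ∂Measure.pi μ :=
        expEntropy_le_sum_integral_expBregman μ hZ hW h.dependsOn_omit
    _ ≤ ∑ k, (s k * ∫ x, Real.exp (Z x) ∂Measure.pi μ
          + b * ∫ x, (Z x - W k x) * Real.exp (Z x) ∂Measure.pi μ) :=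
        Finset.sum_le_sum fun k _ => integral_expBregman_le hZ (hW k) (h.dependsOn_omit k) (hs k)
          hb (h.sub_le_one k) (h.coordAverage_sub_nonneg k) (h.coordAverage_sq_le k)
    _ ≤ _ := by
        rw [Finset.sum_add_distrib, ← Finset.sum_mul, ← Finset.mul_sum]
        exact add_le_add_right (mul_le_mul_of_nonneg_left sum_increments hb) _

lemma expEntropy_const_mul_le (h : IsSelfBounding μ Z W s b) (hs : ∀ k, 0 ≤ s k) (hb : 0 ≤ b)
    {t : ℝ} (ht0 : 0 ≤ t) (ht1 : t ≤ 1) :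
    expEntropy (fun x => t * Z x) (Measure.pi μ)
      ≤ t ^ 2 * ((∑ k, s k) * ∫ x, Real.exp (t * Z x) ∂Measure.pi μ
        + b * ∫ x, Z x * Real.exp (t * Z x) ∂Measure.pi μ) := by
  refine ((h.const_mul ht0 ht1).expEntropy_le (fun k => mul_nonneg (sq_nonneg t) (hs k))
    (mul_nonneg ht0 hb)).trans_eq ?_
  simp only [← Finset.mul_sum, mul_assoc, integral_const_mul]
  ring

end IsSelfBounding

end SelfBounding

section Herbst

lemma mul_one_sub_le_of_mul_deriv_sub_le {ψ : ℝ → ℝ} {S b T : ℝ} (hT : 0 < T)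
    (hψ : Differentiable ℝ ψ) (hψ0 : ψ 0 = 0)
    (hineq : ∀ t ∈ Set.Ioo 0 T, t * deriv ψ t - ψ t ≤ t ^ 2 * (S + b * deriv ψ t)) :
    ψ T * (1 - b * T) ≤ T * deriv ψ 0 + S * T ^ 2 := by
  -- `ψ t / t - S t - b ψ t`, extended by continuity to `t = 0`, is antitone.
  set g : ℝ → ℝ := fun t => dslope ψ 0 t - (S * t + b * ψ t)
  have g_eq {t : ℝ} (ht : t ≠ 0) : g t = ψ t / t - (S * t + b * ψ t) := by
    simp only [g, dslope_of_ne _ ht, slope_def_field, hψ0, sub_zero]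
  have g_cont : Continuous g := by
    have : Continuous (dslope ψ 0) := continuousOn_univ.1 <|
      (continuousOn_dslope Filter.univ_mem).2 ⟨hψ.continuous.continuousOn, hψ 0⟩
    have := hψ.continuous
    fun_prop
  have g_deriv {t : ℝ} (ht : 0 < t) : HasDerivAt g
      ((deriv ψ t * t - ψ t * 1) / t ^ 2 - (S * 1 + b * deriv ψ t)) t := by
    refine HasDerivAt.congr_of_eventuallyEq (((hψ t).hasDerivAt.div (hasDerivAt_id t) ht.ne').sub
      (((hasDerivAt_id t).const_mul S).add ((hψ t).hasDerivAt.const_mul b))) ?_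
    filter_upwards [eventually_ne_nhds ht.ne'] with u hu using g_eq hu
  have g_anti : AntitoneOn g (Set.Icc 0 T) := by
    refine antitoneOn_of_deriv_nonpos (convex_Icc 0 T) g_cont.continuousOn ?_ ?_ <;>
      rw [interior_Icc] <;> intro t ht
    · exact (g_deriv ht.1).differentiableAt.differentiableWithinAt
    · rw [(g_deriv ht.1).deriv, sub_nonpos, div_le_iff₀ (pow_pos ht.1 2)]
      linarith [hineq t ht]
  have g_le : g T ≤ g 0 := g_anti ⟨le_rfl, hT.le⟩ ⟨hT.le, le_rfl⟩ hT.le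
  rw [g_eq hT.ne', show g 0 = deriv ψ 0 by simp [g, hψ0], sub_le_iff_le_add,
    div_le_iff₀ hT] at g_le
  linarith

variable {X : Type*} [MeasurableSpace X] {ρ : Measure X} [IsProbabilityMeasure ρ] {Z : X → ℝ}

lemma BoundedMeasurable.integrableExpSet_eq_univ (hZ : BoundedMeasurable Z) :
    integrableExpSet Z ρ = Set.univ :=
  Set.eq_univ_of_forall fun _ => ((BoundedMeasurable.const _).mul hZ).exp.integrable

lemma BoundedMeasurable.differentiable_cgf (hZ : BoundedMeasurable Z) :
    Differentiable ℝ (cgf Z ρ) := fun t =>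
  (analyticAt_cgf (by simp [hZ.integrableExpSet_eq_univ])).differentiableAt

lemma mul_deriv_cgf_sub_cgf_le_of_expEntropy_le (hZ : BoundedMeasurable Z) {S b t : ℝ}
    (hent : expEntropy (fun x => t * Z x) ρ ≤ t ^ 2 * (S * ∫ x, Real.exp (t * Z x) ∂ρ
      + b * ∫ x, Z x * Real.exp (t * Z x) ∂ρ)) :
    t * deriv (cgf Z ρ) t - cgf Z ρ t ≤ t ^ 2 * (S + b * deriv (cgf Z ρ) t) := by
  have mgf_eq : ∫ x, Real.exp (t * Z x) ∂ρ = mgf Z ρ t := rfl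
  have hexp : BoundedMeasurable fun x => Real.exp (t * Z x) := by fun_prop
  have mgf_pos : 0 < mgf Z ρ t := mgf_pos hexp.integrable
  have tilted_eq : ∫ x, Z x * Real.exp (t * Z x) ∂ρ = deriv (cgf Z ρ) t * mgf Z ρ t := by
    rw [deriv_cgf (by simp [hZ.integrableExpSet_eq_univ]), div_mul_cancel₀ _ mgf_pos.ne']
  have entropy_eq : expEntropy (fun x => t * Z x) ρ
      = (t * deriv (cgf Z ρ) t - cgf Z ρ t) * mgf Z ρ t :=
    calc expEntropy (fun x => t * Z x) ρ
        = ∫ x, (t * (Z x * Real.exp (t * Z x)) - cgf Z ρ t * Real.exp (t * Z x)) ∂ρ := by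
          simp only [expEntropy, mgf_eq, ← cgf.eq_1]
          congr with x
          ring
      _ = t * (deriv (cgf Z ρ) t * mgf Z ρ t) - cgf Z ρ t * mgf Z ρ t := by
          rw [integral_sub (BoundedMeasurable.integrable (by fun_prop))
            (BoundedMeasurable.integrable (by fun_prop)), integral_const_mul, integral_const_mul,
            tilted_eq, mgf_eq]
      _ = _ := by ring
  rw [entropy_eq, mgf_eq, tilted_eq] at hent
  refine le_of_mul_le_mul_right (hent.trans_eq ?_) mgf_pos
  ring

lemma cgf_mul_one_sub_le_of_expEntropy_le (hZ : BoundedMeasurable Z) {S b T : ℝ} (hT : 0 < T)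
    (hent : ∀ t ∈ Set.Ioo 0 T, expEntropy (fun x => t * Z x) ρ
      ≤ t ^ 2 * (S * ∫ x, Real.exp (t * Z x) ∂ρ + b * ∫ x, Z x * Real.exp (t * Z x) ∂ρ)) :
    cgf Z ρ T * (1 - b * T) ≤ T * ∫ x, Z x ∂ρ + S * T ^ 2 := by
  have deriv_zero : deriv (cgf Z ρ) 0 = ∫ x, Z x ∂ρ := by
    rw [deriv_cgf_zero (by simp [hZ.integrableExpSet_eq_univ]), probReal_univ, div_one]
  rw [← deriv_zero]
  exact mul_one_sub_le_of_mul_deriv_sub_le hT hZ.differentiable_cgf cgf_zero fun t ht =>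
    mul_deriv_cgf_sub_cgf_le_of_expEntropy_le hZ (hent t ht)

lemma cgf_le_of_expEntropy_le (hZ : BoundedMeasurable Z) {S b m T : ℝ} (hT : 0 < T)
    (hbT : b * T < 1) (hm : ∫ x, Z x ∂ρ ≤ m)
    (hent : ∀ t ∈ Set.Ioo 0 T, expEntropy (fun x => t * Z x) ρ
      ≤ t ^ 2 * (S * ∫ x, Real.exp (t * Z x) ∂ρ + b * ∫ x, Z x * Real.exp (t * Z x) ∂ρ)) :
    cgf Z ρ T ≤ T * m + (S + b * m) * T ^ 2 / (1 - b * T) := by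
  have hpos : 0 < 1 - b * T := sub_pos.2 hbT
  calc cgf Z ρ T ≤ (T * m + S * T ^ 2) / (1 - b * T) := by
        rw [le_div_iff₀ hpos]
        linarith [cgf_mul_one_sub_le_of_expEntropy_le hZ hT hent,
          mul_le_mul_of_nonneg_left hm hT.le]
    _ = T * m + (S + b * m) * T ^ 2 / (1 - b * T) := by
        rw [div_eq_iff hpos.ne', add_mul, div_mul_cancel₀ _ hpos.ne']
        ring

lemma measureReal_ge_le_exp_of_cgf_le (hint : ∀ t, Integrable (fun x => Real.exp (t * Z x)) ρ)
    {m V c r : ℝ} (hV : 0 < V) (hc : 0 ≤ c) (hr : 0 < r)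
    (hcgf : ∀ t, 0 < t → c * t < 1 → cgf Z ρ t ≤ t * m + V * t ^ 2 / (1 - c * t)) :
    ρ.real {x | m + r ≤ Z x} ≤ Real.exp (-(r ^ 2 / (2 * (2 * V + c * r)))) := by
  have one_sub_eq : 1 - c * (r / (2 * V + c * r)) = 2 * V / (2 * V + c * r) := by
    field_simp
    ring
  have hct : c * (r / (2 * V + c * r)) < 1 := by
    rw [← sub_pos, one_sub_eq]
    positivity
  refine (measure_ge_le_exp_cgf (m + r) (by positivity : 0 ≤ r / (2 * V + c * r))
    (hint _)).trans (Real.exp_le_exp.2 ?_)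
  calc -(r / (2 * V + c * r)) * (m + r) + cgf Z ρ (r / (2 * V + c * r))
      ≤ -(r / (2 * V + c * r)) * (m + r) + (r / (2 * V + c * r) * m
          + V * (r / (2 * V + c * r)) ^ 2 / (2 * V / (2 * V + c * r))) := by
        rw [← one_sub_eq]
        exact add_le_add_right (hcgf _ (by positivity) hct) _
    _ = -(r ^ 2 / (2 * (2 * V + c * r))) := by
        field_simp
        ring

theorem IsSelfBounding.measureReal_ge_le {κ : Type*} [Fintype κ] [DecidableEq κ] {X : κ → Type*}
    [∀ i, MeasurableSpace (X i)] {μ : ∀ i, Measure (X i)} [∀ i, IsProbabilityMeasure (μ i)]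
    {Z : (∀ i, X i) → ℝ} {W : κ → (∀ i, X i) → ℝ} {s : κ → ℝ} {b : ℝ}
    (h : IsSelfBounding μ Z W s b) (hs : ∀ k, 0 ≤ s k) (hb : 1 ≤ b) {m r : ℝ} (hm : 0 < m)
    (hr : 0 < r) (hmean : ∫ x, Z x ∂Measure.pi μ ≤ m) :
    (Measure.pi μ).real {x | m + r ≤ Z x}
      ≤ Real.exp (-(r ^ 2 / (2 * (2 * (∑ k, s k + b * m) + b * r)))) := by
  have hb0 : 0 < b := zero_lt_one.trans_le hb
  have hS : 0 ≤ ∑ k, s k := Finset.sum_nonneg fun k _ => hs k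
  have hZ := h.boundedMeasurable
  refine measureReal_ge_le_exp_of_cgf_le
    (fun t => ((BoundedMeasurable.const t).mul hZ).exp.integrable) (by positivity) hb0.le hr
    fun T hT hbT => ?_
  refine cgf_le_of_expEntropy_le hZ hT hbT hmean fun t ht => ?_
  exact h.expEntropy_const_mul_le hs hb0.le ht.1.le (by nlinarith [ht.1, ht.2])

end Herbst

section Supremum

section OneCoordinate

variable {ι Y : Type*} {c : ι → ℝ} {g : ι → Y → ℝ}

lemma bddAbove_abs_add (hc : BddAbove (Set.range fun a => |c a|)) (hg1 : ∀ a y, |g a y| ≤ 1)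
    (y : Y) : BddAbove (Set.range fun a => |c a + g a y|) := by
  obtain ⟨C, hC⟩ := hc
  refine ⟨C + 1, Set.forall_mem_range.2 fun a => ?_⟩
  exact (abs_add_le _ _).trans (add_le_add (hC (Set.mem_range_self a)) (hg1 a y))

variable [Nonempty ι]

lemma iSup_abs_add_le (hc : BddAbove (Set.range fun a => |c a|)) (hg1 : ∀ a y, |g a y| ≤ 1)
    (y : Y) : ⨆ a, |c a + g a y| ≤ (⨆ a, |c a|) + 1 :=
  ciSup_le fun a => (abs_add_le _ _).trans (add_le_add (le_ciSup hc a) (hg1 a y))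

lemma exists_mul_sub_le_iSup_abs_add_sub (hc : BddAbove (Set.range fun a => |c a|))
    (hg1 : ∀ a y, |g a y| ≤ 1) {ε : ℝ} (hε : 0 < ε) :
    ∃ a, ∃ σ : ℝ, |σ| = 1 ∧ ∀ y, σ * g a y - ε ≤ (⨆ b, |c b + g b y|) - ⨆ b, |c b| := by
  obtain ⟨a, ha⟩ := exists_lt_of_lt_ciSup (sub_lt_self (⨆ b, |c b|) hε)
  obtain ⟨σ, hσ, hσc⟩ : ∃ σ : ℝ, |σ| = 1 ∧ |c a| = σ * c a := by
    rcases abs_choice (c a) with h | h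
    · exact ⟨1, abs_one, by rw [h, one_mul]⟩
    · exact ⟨-1, by simp, by rw [h, neg_one_mul]⟩
  refine ⟨a, σ, hσ, fun y => ?_⟩
  have hsup : σ * (c a + g a y) ≤ ⨆ b, |c b + g b y| :=
    calc σ * (c a + g a y) ≤ |c a + g a y| := by
          simpa only [abs_mul, hσ, one_mul] using le_abs_self (σ * (c a + g a y))
      _ ≤ _ := le_ciSup (bddAbove_abs_add hc hg1 y) a
  linarith

variable [Countable ι] [MeasurableSpace Y] {μ : Measure Y} [IsProbabilityMeasure μ]

lemma BoundedMeasurable.iSup_abs_add (hc : BddAbove (Set.range fun a => |c a|))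
    (hg : ∀ a, Measurable (g a)) (hg1 : ∀ a y, |g a y| ≤ 1) :
    BoundedMeasurable fun y => ⨆ a, |c a + g a y| :=
  .iSup_abs (fun a => (hg a).const_add _) fun a y =>
    (le_ciSup (bddAbove_abs_add hc hg1 y) a).trans (iSup_abs_add_le hc hg1 y)

lemma integral_iSup_abs_add_sub_nonneg (hc : BddAbove (Set.range fun a => |c a|))
    (hg : ∀ a, Measurable (g a)) (hg1 : ∀ a y, |g a y| ≤ 1) (hg0 : ∀ a, ∫ y, g a y ∂μ = 0) :
    0 ≤ ∫ y, ((⨆ a, |c a + g a y|) - ⨆ a, |c a|) ∂μ := by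
  have hsup : BoundedMeasurable fun y => ⨆ a, |c a + g a y| := .iSup_abs_add hc hg hg1
  rw [integral_sub hsup.integrable (integrable_const _), integral_const, probReal_univ, one_smul,
    sub_nonneg]
  refine ciSup_le fun a => ?_
  have hga : BoundedMeasurable (g a) := ⟨hg a, 1, hg1 a⟩
  calc |c a| = |∫ y, (c a + g a y) ∂μ| := by
        rw [integral_add (integrable_const _) hga.integrable, hg0, integral_const, probReal_univ,
          one_smul, add_zero]
    _ ≤ ∫ y, |c a + g a y| ∂μ := abs_integral_le_integral_abs
    _ ≤ ∫ y, ⨆ a, |c a + g a y| ∂μ :=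
        integral_mono ((integrable_const _).add hga.integrable).abs hsup.integrable
          fun y => le_ciSup (bddAbove_abs_add hc hg1 y) a

lemma integral_one_sub_sq_le_of_forall_mul_sub_le {h D : Y → ℝ} (hh : BoundedMeasurable h)
    (hD : BoundedMeasurable D) (hD1 : ∀ y, D y ≤ 1) (hh0 : ∫ y, h y ∂μ = 0) {s σ ε : ℝ}
    (hs : ∫ y, h y ^ 2 ∂μ ≤ s) (hσ : |σ| = 1) (hle : ∀ y, σ * h y - ε ≤ D y) :
    ∫ y, (1 - D y) ^ 2 ∂μ ≤ (1 + ε) ^ 2 + s :=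
  calc ∫ y, (1 - D y) ^ 2 ∂μ
      ≤ ∫ y, (1 + ε - σ * h y) ^ 2 ∂μ :=
        integral_mono (BoundedMeasurable.integrable (by fun_prop))
          (BoundedMeasurable.integrable (by fun_prop)) fun y =>
            pow_le_pow_left₀ (sub_nonneg.2 (hD1 y)) (by linarith [hle y]) 2
    _ = ∫ y, ((1 + ε) ^ 2 + h y ^ 2 - 2 * (1 + ε) * σ * h y) ∂μ := by
        have hσ2 : σ ^ 2 = 1 := by rw [← sq_abs, hσ, one_pow]
        congr with y
        linear_combination h y ^ 2 * hσ2
    _ = (1 + ε) ^ 2 + ∫ y, h y ^ 2 ∂μ := by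
        rw [integral_sub (BoundedMeasurable.integrable (by fun_prop))
          (BoundedMeasurable.integrable (by fun_prop)),
          integral_add (integrable_const _) (hh.pow 2).integrable, integral_const_mul, hh0,
          integral_const, probReal_univ, one_smul, mul_zero, sub_zero]
    _ ≤ _ := add_le_add_right hs _

lemma integral_iSup_abs_add_sub_sq_le (hc : BddAbove (Set.range fun a => |c a|))
    (hg : ∀ a, Measurable (g a)) (hg1 : ∀ a y, |g a y| ≤ 1) (hg0 : ∀ a, ∫ y, g a y ∂μ = 0)
    {s : ℝ} (hs : ∀ a, ∫ y, g a y ^ 2 ∂μ ≤ s) :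
    ∫ y, ((⨆ a, |c a + g a y|) - ⨆ a, |c a|) ^ 2 ∂μ
      ≤ s + 2 * ∫ y, ((⨆ a, |c a + g a y|) - ⨆ a, |c a|) ∂μ := by
  set D : Y → ℝ := fun y => (⨆ a, |c a + g a y|) - ⨆ a, |c a|
  have hD : BoundedMeasurable D := (BoundedMeasurable.iSup_abs_add hc hg hg1).sub (.const _)
  have approx (ε : ℝ) (hε : 0 < ε) : ∫ y, (1 - D y) ^ 2 ∂μ ≤ (1 + ε) ^ 2 + s := by
    obtain ⟨a, σ, hσ, hle⟩ := exists_mul_sub_le_iSup_abs_add_sub hc hg1 hε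
    exact integral_one_sub_sq_le_of_forall_mul_sub_le ⟨hg a, 1, hg1 a⟩ hD
      (fun y => sub_le_iff_le_add'.2 (iSup_abs_add_le hc hg1 y)) (hg0 a) (hs a) hσ hle
  have limit : ∫ y, (1 - D y) ^ 2 ∂μ ≤ (1 + 0) ^ 2 + s :=
    ge_of_tendsto ((by fun_prop : Continuous fun ε : ℝ => (1 + ε) ^ 2 + s).continuousWithinAt
      (s := Set.Ioi 0)) (eventually_nhdsWithin_of_forall approx)
  have expand : ∫ y, (1 - D y) ^ 2 ∂μ = 1 - 2 * ∫ y, D y ∂μ + ∫ y, D y ^ 2 ∂μ := by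
    have : ∀ y, (1 - D y) ^ 2 = 1 - 2 * D y + D y ^ 2 := fun y => by ring
    simp only [this]
    rw [integral_add (BoundedMeasurable.integrable (by fun_prop)) (hD.pow 2).integrable,
      integral_sub (integrable_const _) (BoundedMeasurable.integrable (by fun_prop)),
      integral_const_mul, integral_const, probReal_univ, one_smul]
  linarith

end OneCoordinate

variable {κ ι : Type*} {X : κ → Type*}

/-- The supremum over the family `f` of the absolute sums over the coordinates in `s`. -/
noncomputable def supAbsSum (f : ι → ∀ i, X i → ℝ) (s : Finset κ) (x : ∀ i, X i) : ℝ :=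
  ⨆ a, |∑ i ∈ s, f a i (x i)|

variable {f : ι → ∀ i, X i → ℝ}

lemma abs_sum_le_card (hf1 : ∀ a i u, |f a i u| ≤ 1) (s : Finset κ) (a : ι) (x : ∀ i, X i) :
    |∑ i ∈ s, f a i (x i)| ≤ s.card := by
  simpa using (s.abs_sum_le_sum_abs _).trans (s.sum_le_card_nsmul _ 1 fun i _ => hf1 a i (x i))

lemma bddAbove_abs_sum (hf1 : ∀ a i u, |f a i u| ≤ 1) (s : Finset κ) (x : ∀ i, X i) :
    BddAbove (Set.range fun a => |∑ i ∈ s, f a i (x i)|) :=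
  ⟨s.card, Set.forall_mem_range.2 fun a => abs_sum_le_card hf1 s a x⟩

lemma BoundedMeasurable.supAbsSum [∀ i, MeasurableSpace (X i)] [Countable ι] [Nonempty ι]
    (hf : ∀ a i, Measurable (f a i)) (hf1 : ∀ a i u, |f a i u| ≤ 1) (s : Finset κ) :
    BoundedMeasurable (supAbsSum f s) :=
  .iSup_abs (fun a => Finset.measurable_sum s fun i _ => (hf a i).comp (measurable_pi_apply i))
    fun a x => abs_sum_le_card hf1 s a x

variable [Fintype κ] [DecidableEq κ]

lemma dependsOn_supAbsSum_erase (k : κ) :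
    DependsOn (supAbsSum f (Finset.univ.erase k)) {k}ᶜ := fun x x' hxx' => by
  have sum_eq (a : ι) : ∑ i ∈ Finset.univ.erase k, f a i (x i)
      = ∑ i ∈ Finset.univ.erase k, f a i (x' i) :=
    Finset.sum_congr rfl fun i hi => by rw [hxx' i (Finset.ne_of_mem_erase hi)]
  simp only [supAbsSum, sum_eq]

lemma supAbsSum_erase_update (k : κ) (x : ∀ i, X i) (y : X k) :
    supAbsSum f (Finset.univ.erase k) (Function.update x k y)
      = supAbsSum f (Finset.univ.erase k) x :=
  dependsOn_supAbsSum_erase k fun _ hi => Function.update_of_ne hi _ _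

lemma supAbsSum_univ_update (k : κ) (x : ∀ i, X i) (y : X k) :
    supAbsSum f Finset.univ (Function.update x k y)
      = ⨆ a, |∑ i ∈ Finset.univ.erase k, f a i (x i) + f a k y| := by
  have sum_eq (a : ι) : ∑ i, f a i (Function.update x k y i)
      = ∑ i ∈ Finset.univ.erase k, f a i (x i) + f a k y := by
    rw [← Finset.sum_erase_add _ _ (Finset.mem_univ k), Function.update_self]
    congr 1
    exact Finset.sum_congr rfl fun i hi => by
      rw [Function.update_of_ne (Finset.ne_of_mem_erase hi)]
  simp only [supAbsSum, sum_eq]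

variable [Nonempty ι]

lemma supAbsSum_univ_sub_erase_le_one (hf1 : ∀ a i u, |f a i u| ≤ 1) (k : κ) (x : ∀ i, X i) :
    supAbsSum f Finset.univ x - supAbsSum f (Finset.univ.erase k) x ≤ 1 := by
  rw [sub_le_iff_le_add', ← Function.update_eq_self k x, supAbsSum_univ_update,
    Function.update_eq_self]
  exact iSup_abs_add_le (bddAbove_abs_sum hf1 _ x) (fun a => hf1 a k) (x k)

lemma sum_supAbsSum_univ_sub_erase_le (hf1 : ∀ a i u, |f a i u| ≤ 1) (x : ∀ i, X i) :
    ∑ k, (supAbsSum f Finset.univ x - supAbsSum f (Finset.univ.erase k) x)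
      ≤ supAbsSum f Finset.univ x := by
  rw [Finset.sum_sub_distrib, Finset.sum_const, nsmul_eq_mul, sub_le_iff_le_add]
  conv_lhs => rw [supAbsSum, Real.mul_iSup_of_nonneg (Nat.cast_nonneg _)]
  refine ciSup_le fun a => ?_
  -- Each summand is missing from exactly one of the sums with one term left out.
  have sum_erase : ((Finset.univ : Finset κ).card : ℝ) * ∑ i, f a i (x i)
      = ∑ i, f a i (x i) + ∑ k, ∑ i ∈ Finset.univ.erase k, f a i (x i) := by
    simp only [Finset.sum_erase_eq_sub (Finset.mem_univ _), Finset.sum_sub_distrib,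
      Finset.sum_const, nsmul_eq_mul, add_sub_cancel]
  calc ((Finset.univ : Finset κ).card : ℝ) * |∑ i, f a i (x i)|
      = |∑ i, f a i (x i) + ∑ k, ∑ i ∈ Finset.univ.erase k, f a i (x i)| := by
        rw [← sum_erase, abs_mul, Nat.abs_cast]
    _ ≤ |∑ i, f a i (x i)| + ∑ k, |∑ i ∈ Finset.univ.erase k, f a i (x i)| :=
        (abs_add_le _ _).trans (add_le_add_right (Finset.abs_sum_le_sum_abs _ _) _)
    _ ≤ _ := add_le_add (le_ciSup (bddAbove_abs_sum hf1 _ x) a)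
        (Finset.sum_le_sum fun k _ => le_ciSup (bddAbove_abs_sum hf1 _ x) a)

variable [∀ i, MeasurableSpace (X i)] {μ : ∀ i, Measure (X i)} [∀ i, IsProbabilityMeasure (μ i)]
  [Countable ι]

theorem isSelfBounding_supAbsSum (hf : ∀ a i, Measurable (f a i)) (hf1 : ∀ a i u, |f a i u| ≤ 1)
    (hf0 : ∀ a i, ∫ u, f a i u ∂μ i = 0) {s : κ → ℝ} (hs : ∀ a i, ∫ u, f a i u ^ 2 ∂μ i ≤ s i) :
    IsSelfBounding μ (supAbsSum f Finset.univ)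
      (fun k => supAbsSum f (Finset.univ.erase k)) s 2 where
  boundedMeasurable := .supAbsSum hf hf1 _
  boundedMeasurable_omit k := .supAbsSum hf hf1 _
  dependsOn_omit := dependsOn_supAbsSum_erase
  sub_le_one := supAbsSum_univ_sub_erase_le_one hf1
  sum_sub_le := sum_supAbsSum_univ_sub_erase_le hf1
  coordAverage_sub_nonneg k x := by
    simp only [coordAverage, supAbsSum_univ_update, supAbsSum_erase_update]
    exact integral_iSup_abs_add_sub_nonneg (bddAbove_abs_sum hf1 _ x) (fun a => hf a k)
      (fun a => hf1 a k) (fun a => hf0 a k)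
  coordAverage_sq_le k x := by
    simp only [coordAverage, supAbsSum_univ_update, supAbsSum_erase_update]
    exact integral_iSup_abs_add_sub_sq_le (bddAbove_abs_sum hf1 _ x) (fun a => hf a k)
      (fun a => hf1 a k) (fun a => hf0 a k) (fun a => hs a k)

end Supremum

section Tail

variable {Ω : Type*} [MeasurableSpace Ω] {P : Measure Ω} [IsProbabilityMeasure P]
  {κ ι : Type*} [Fintype κ] [Countable ι] [Nonempty ι] {E : κ → Type*} [∀ i, MeasurableSpace (E i)]
  {U : ∀ i, Ω → E i} {f : ι → ∀ i, E i → ℝ} {s : κ → ℝ} {m r B : ℝ}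

theorem measureReal_iSup_abs_sum_ge_le (hU : ∀ i, AEMeasurable (U i) P) (hindep : iIndepFun U P)
    (hf : ∀ a i, Measurable (f a i)) (hf1 : ∀ a i u, |f a i u| ≤ 1)
    (hf0 : ∀ a i, ∫ ω, f a i (U i ω) ∂P = 0) (hs : ∀ a i, ∫ ω, f a i (U i ω) ^ 2 ∂P ≤ s i)
    (hm : 0 < m) (hr : 0 < r) (hmean : ∫ ω, ⨆ a, |∑ i, f a i (U i ω)| ∂P ≤ m) :
    P.real {ω | m + r ≤ ⨆ a, |∑ i, f a i (U i ω)|}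
      ≤ Real.exp (-(r ^ 2 / (2 * (2 * (∑ i, s i + 2 * m) + 2 * r)))) := by
  classical
  have (i : κ) : IsProbabilityMeasure (P.map (U i)) := Measure.isProbabilityMeasure_map (hU i)
  have hs0 (i : κ) : 0 ≤ s i :=
    (integral_nonneg fun ω => sq_nonneg _).trans (hs (Classical.arbitrary ι) i)
  have hjoint : AEMeasurable (fun ω i => U i ω) P := aemeasurable_pi_lambda _ hU
  have law_eq : P.map (fun ω i => U i ω) = Measure.pi fun i => P.map (U i) :=
    hindep.map_fun_eq_pi_map hU
  have hZ : BoundedMeasurable (supAbsSum f Finset.univ) := .supAbsSum hf hf1 _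
  have hself : IsSelfBounding (fun i => P.map (U i)) (supAbsSum f Finset.univ)
      (fun k => supAbsSum f (Finset.univ.erase k)) s 2 := by
    refine isSelfBounding_supAbsSum hf hf1 (fun a i => ?_) fun a i => ?_
    · rw [integral_map (hU i) (hf a i).aestronglyMeasurable, hf0]
    · rw [integral_map (hU i) ((hf a i).pow_const 2).aestronglyMeasurable]
      exact hs a i
  have htail := hself.measureReal_ge_le hs0 one_le_two hm hr <| by
    rwa [← law_eq, integral_map hjoint hZ.measurable.aestronglyMeasurable]
  rwa [← law_eq, map_measureReal_apply_of_aemeasurable hjoint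
    (measurableSet_le measurable_const hZ.measurable)] at htail

theorem measureReal_iSup_abs_sum_ge_le_of_abs_le (hU : ∀ i, AEMeasurable (U i) P)
    (hindep : iIndepFun U P) (hf : ∀ a i, Measurable (f a i)) (hB : 0 < B)
    (hfB : ∀ a i u, |f a i u| ≤ B) (hf0 : ∀ a i, ∫ ω, f a i (U i ω) ∂P = 0)
    (hs : ∀ a i, ∫ ω, f a i (U i ω) ^ 2 ∂P ≤ s i) (hm : 0 < m) (hr : 0 < r)
    (hmean : ∫ ω, ⨆ a, |∑ i, f a i (U i ω)| ∂P ≤ m) :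
    P.real {ω | m + r ≤ ⨆ a, |∑ i, f a i (U i ω)|}
      ≤ Real.exp (-(r ^ 2 / (4 * (∑ i, s i + 2 * B * m + B * r)))) := by
  have iSup_eq (ω : Ω) :
      ⨆ a, |∑ i, f a i (U i ω) / B| = (⨆ a, |∑ i, f a i (U i ω)|) / B := by
    simp only [← Finset.sum_div, abs_div, abs_of_pos hB]
    simp only [div_eq_mul_inv, Real.iSup_mul_of_nonneg (inv_nonneg.2 hB.le)]
  have htail := measureReal_iSup_abs_sum_ge_le (f := fun a i u => f a i u / B)
    (s := fun i => s i / B ^ 2) (m := m / B) (r := r / B) hU hindep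
    (fun a i => (hf a i).div_const B)
    (fun a i u => by rw [abs_div, abs_of_pos hB]; exact (div_le_one hB).2 (hfB a i u))
    (fun a i => by rw [integral_div, hf0, zero_div])
    (fun a i => by
      simp only [div_pow, integral_div]
      exact div_le_div_of_nonneg_right (hs a i) (sq_nonneg B))
    (by positivity) (by positivity)
    (by simp only [iSup_eq, integral_div]; exact div_le_div_of_nonneg_right hmean hB.le)
  simp only [iSup_eq, ← add_div, div_le_div_iff_of_pos_right hB] at htail
  refine htail.trans_eq ?_
  rw [← Finset.sum_div]
  field_simp
  ring_nf

lemma exp_neg_sq_div_le_max {S m B ζ : ℝ} (hS : 0 < S) (hm : 0 < m) (hB : 0 < B) (hζ : 0 < ζ) :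
    Real.exp (-((2 * ζ * m) ^ 2 / (4 * (S + 2 * B * m + B * (2 * ζ * m)))))
      ≤ max (Real.exp (-(ζ ^ 2 / 6) * (m ^ 2 / S)))
        (Real.exp (-(min ζ 1 * ζ / 21) * (2 * m / B))) := by
  rw [le_max_iff, Real.exp_le_exp, Real.exp_le_exp, neg_mul, neg_mul, neg_le_neg_iff,
    neg_le_neg_iff]
  rcases le_total (S + 2 * B * m + B * (2 * ζ * m)) (6 * S) with hle | hle
  · left
    calc ζ ^ 2 / 6 * (m ^ 2 / S) = (2 * ζ * m) ^ 2 / (4 * (6 * S)) := by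
          field_simp
          ring
      _ ≤ _ := by gcongr
  · right
    have denominator_le :
        S + 2 * B * m + B * (2 * ζ * m) ≤ 12 / 5 * (B * m * (1 + ζ)) := by linarith
    have min_mul_le : min ζ 1 * (1 + ζ) ≤ 2 * ζ := by
      rcases le_total ζ 1 with h | h
      · rw [min_eq_left h]
        nlinarith
      · rw [min_eq_right h]
        linarith
    have min_le : min ζ 1 ≤ 2 * ζ / (1 + ζ) := (le_div_iff₀ (by positivity)).2 min_mul_le
    calc min ζ 1 * ζ / 21 * (2 * m / B)
        ≤ 2 * ζ / (1 + ζ) * ζ / 21 * (2 * m / B) := by gcongr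
      _ = 4 * ζ ^ 2 * m / (21 * (B * (1 + ζ))) := by
          field_simp
          ring
      _ ≤ 5 * ζ ^ 2 * m / (12 * (B * (1 + ζ))) := by
          gcongr <;> norm_num
      _ = (2 * ζ * m) ^ 2 / (4 * (12 / 5 * (B * m * (1 + ζ)))) := by
          field_simp
          ring
      _ ≤ _ := by gcongr

lemma abs_sub_integral_le {φ : Ω → ℝ} {M : ℝ} (hφ : ∀ ω, |φ ω| ≤ M) {t : ℝ} (ht : |t| ≤ M) :
    |t - ∫ ω, φ ω ∂P| ≤ 2 * M := by
  have hmean : |∫ ω, φ ω ∂P| ≤ M := by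
    simpa using norm_integral_le_of_norm_le_const (μ := P) (f := φ) (.of_forall hφ)
  exact (abs_sub _ _).trans (by linarith)

end Tail

theorem talagrand_inequality_general
    {Ω : Type*} [MeasurableSpace Ω] {P : Measure Ω} [IsProbabilityMeasure P]
    {n : ℕ} (hn : 0 < n) {E : Fin n → Type*} [∀ i, MeasurableSpace (E i)] {U : ∀ i, Ω → E i}
    (hU : ∀ i, AEMeasurable (U i) P) (hindep : iIndepFun U P)
    {ι : Type*} [Countable ι] [Nonempty ι] {τ : ι → ∀ i, E i → ℝ}
    (hτ : ∀ a i, Measurable (τ a i)) {ν : ι → Ω → ℝ}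
    (hν : ∀ a ω, ν a ω = (n : ℝ)⁻¹ * ∑ i, (τ a i (U i ω) - ∫ ω', τ a i (U i ω') ∂P))
    {M H v : ℝ} (hM : 0 < M) (hH : 0 < H) (hv : 0 < v) (hbound : ∀ a i u, |τ a i u| ≤ M)
    (hexp : ∫ ω, ⨆ a, |ν a ω| ∂P ≤ H) (hvar : ∀ a i, Var[fun ω => τ a i (U i ω); P] ≤ v)
    {ζ : ℝ} (hζ : 0 < ζ) :
    P.real {ω | (1 + 2 * ζ) * H ≤ ⨆ a, |ν a ω|}
      ≤ max (Real.exp (-(ζ ^ 2 / 6) * (n * H ^ 2 / v)))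
          (Real.exp (-(min ζ 1 * ζ / 21) * (n * H / M))) := by
  have hn' : (0 : ℝ) < n := Nat.cast_pos.2 hn
  have hτU (a : ι) (i : Fin n) : AEMeasurable (fun ω => τ a i (U i ω)) P :=
    (hτ a i).comp_aemeasurable (hU i)
  have iSup_eq (ω : Ω) : ⨆ a, |∑ i, (τ a i (U i ω) - ∫ ω', τ a i (U i ω') ∂P)|
      = n * ⨆ a, |ν a ω| := by
    simp only [hν, abs_mul, abs_inv, Nat.abs_cast, Real.mul_iSup_of_nonneg hn'.le,
      mul_inv_cancel_left₀ hn'.ne']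
  have htail := measureReal_iSup_abs_sum_ge_le_of_abs_le (s := fun _ => v) (B := 2 * M)
    (f := fun a i u => τ a i u - ∫ ω, τ a i (U i ω) ∂P) (m := n * H) (r := 2 * ζ * (n * H))
    hU hindep (fun a i => (hτ a i).sub_const _) (by positivity)
    (fun a i u => abs_sub_integral_le (fun ω => hbound a i _) (hbound a i u))
    (fun a i => by simpa only [average_eq_integral] using integral_sub_average P _)
    (fun a i => (variance_eq_integral (hτU a i)).symm.trans_le (hvar a i))
    (by positivity) (by positivity)
    (by simp only [iSup_eq, integral_const_mul]; gcongr)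
  have threshold_eq : n * H + 2 * ζ * (n * H) = n * ((1 + 2 * ζ) * H) := by ring
  simp only [iSup_eq, threshold_eq, mul_le_mul_iff_right₀ hn', Finset.sum_const, Finset.card_univ,
    Fintype.card_fin, nsmul_eq_mul] at htail
  have hmax := htail.trans (exp_neg_sq_div_le_max (by positivity) (by positivity)
    (by positivity) hζ)
  rwa [show (n * H) ^ 2 / (n * v) = n * H ^ 2 / v by field_simp,
    show 2 * (n * H) / (2 * M) = n * H / M by field_simp] at hmax

/-- **Talagrand's inequality** in the Birgé–Massart form (Lemma 2 of the paper). -/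
theorem talagrand_inequality
    {Ω : Type*} [MeasurableSpace Ω] (P : Measure Ω) [IsProbabilityMeasure P]
    {E : Type*} [MeasurableSpace E]
    (n : ℕ) (hn : 0 < n) (U : Fin n → Ω → E)
    (hmeas : ∀ i, Measurable (U i))
    (hindep : iIndepFun U P)
    (hident : ∀ i j, Measure.map (U i) P = Measure.map (U j) P)
    {ι : Type*} [Countable ι] [Nonempty ι]
    (τ : ι → E → ℝ) (hτmeas : ∀ a, Measurable (τ a))
    (ν : ι → Ω → ℝ)
    (hν : ∀ a ω, ν a ω = (n : ℝ)⁻¹ * ∑ i, (τ a (U i ω) - ∫ ω', τ a (U i ω') ∂P))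
    (M H v : ℝ) (hM : 0 < M) (hH : 0 < H) (hv : 0 < v)
    (hbound : ∀ a u, |τ a u| ≤ M)
    (hexp : ∫ ω, (⨆ a, |ν a ω|) ∂P ≤ H)
    (hvar : ∀ a, ∫ ω, (τ a (U ⟨0, hn⟩ ω) - ∫ ω', τ a (U ⟨0, hn⟩ ω') ∂P) ^ 2 ∂P ≤ v)
    (ζ : ℝ) (hζ : 0 < ζ) :
    (P {ω | (1 + 2 * ζ) * H ≤ ⨆ a, |ν a ω|}).toReal
      ≤ 2 * max (Real.exp (-(ζ ^ 2 / 6) * (n * H ^ 2 / v)))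
          (Real.exp (-(min ζ 1 * ζ / 21) * (n * H / M))) := by
  refine (talagrand_inequality_general hn (fun i => (hmeas i).aemeasurable) hindep
    (fun a _ => hτmeas a) hν hM hH hv (fun a _ => hbound a) hexp (fun a i => ?_) hζ).trans
    (le_mul_of_one_le_left (le_max_of_le_left (Real.exp_nonneg _)) one_le_two)
  have hlaw : IdentDistrib (U i) (U ⟨0, hn⟩) P P :=
    ⟨(hmeas i).aemeasurable, (hmeas _).aemeasurable, hident i _⟩
  refine (hlaw.comp (hτmeas a)).variance_eq.trans_le ?_
  rw [variance_eq_integral ((hτmeas a).comp (hmeas _)).aemeasurable]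
  exact hvar a
end
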